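/- arXiv:1603.01710 — 2 statements merged into one kernel-verified Lean document; each statement's English description precedes it below -/
import Mathlib

section
/- Let s, t >= 2 be integers and put l := lcm(s,t). Consider the mix of G_s := [3,3,4,3]_{(s,s,0,0)} and H_t := [3,3,4,3]_{(t,0,0,0)}, i.e. the subgroup of G_s x H_t generated by the five pairs (pi'_s(a), pi_t(a)), ..., (pi'_s(e), pi_t(e)). If lcm(2s, t) = 2l, then this mix is isomorphic to [3,3,4,3]_{(l,l,0,0)}; otherwise it is isomorphic to [3,3,4,3]_{(l,0,0,0)}. -/
/-- Coxeter matrix of the string diagram [3,3,4,3] on generators a,b,c,d,e = 0..4. -/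
def cox5 : Fin 5 → Fin 5 → ℕ := fun i j =>
  if i = j then 1
  else if (i : ℕ) + 1 = (j : ℕ) ∨ (j : ℕ) + 1 = (i : ℕ) then
    (if ((i : ℕ) = 2 ∧ (j : ℕ) = 3) ∨ ((i : ℕ) = 3 ∧ (j : ℕ) = 2) then 4 else 3)
  else 2

def rels5 : Set (FreeGroup (Fin 5)) :=
  Set.range fun p : Fin 5 × Fin 5 => (FreeGroup.of p.1 * FreeGroup.of p.2) ^ cox5 p.1 p.2

/-- The Coxeter group of type [3,3,4,3]. -/
abbrev W5 : Type := PresentedGroup rels5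

def v (i : Fin 5) : W5 := PresentedGroup.of i

/-- sigma = d^(cb) = b*c*d*c*b. -/
def sg5 : W5 := v 1 * v 2 * v 3 * v 2 * v 1
/-- tau = c^(de) = e*d*c*d*e. -/
def tu5 : W5 := v 4 * v 3 * v 2 * v 3 * v 4

/-- [3,3,4,3]_{(s,s,0,0)} : the quotient of [3,3,4,3] by the normal closure of (a σ τ)^{2s}. -/
abbrev Gq (s : ℕ) : Type := W5 ⧸ Subgroup.normalClosure ({(v 0 * sg5 * tu5) ^ (2 * s)} : Set W5)

/-- [3,3,4,3]_{(s,0,0,0)} : the quotient of [3,3,4,3] by the normal closure of (a σ τ σ)^s. -/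
abbrev Hq (s : ℕ) : Type := W5 ⧸ Subgroup.normalClosure ({(v 0 * sg5 * tu5 * sg5) ^ s} : Set W5)

/-- The quotient map W5 → [3,3,4,3]_{(s,s,0,0)}. -/
def piG (s : ℕ) : W5 →* Gq s := QuotientGroup.mk' _

/-- The quotient map W5 → [3,3,4,3]_{(s,0,0,0)}. -/
def piH (s : ℕ) : W5 →* Hq s := QuotientGroup.mk' _


/-! ### The word problem in `W5` -/

/-- Evaluation of a word stored in reverse order. -/
def evw : List (Fin 5) → W5
  | [] => 1
  | x :: w => evw w * v x

/-- If the element represented by the reversed word `w` has right descent `x`,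
return a word for the element times `x`. Only braid moves are used. -/
def bring : ℕ → Fin 5 → List (Fin 5) → Option (List (Fin 5))
  | 0, _, _ => none
  | _ + 1, _, [] => none
  | k + 1, x, y :: w =>
    if y = x then some w
    else
      match cox5 x y with
      | 2 => (bring k x w).bind fun w2 => some (y :: w2)
      | 3 => (bring k x w).bind fun w2 => (bring k y w2).bind fun w3 => some (y :: x :: w3)
      | 4 => (bring k x w).bind fun w2 => (bring k y w2).bind fun w3 =>
          (bring k x w3).bind fun w4 => some (y :: x :: y :: w4)
      | _ => none

/-- Reduction of a reversed word. -/
def redw : List (Fin 5) → List (Fin 5)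
  | [] => []
  | x :: w =>
    match bring (redw w).length x (redw w) with
    | some r => r
    | none => x :: redw w

lemma rel5 (i j : Fin 5) : (v i * v j) ^ cox5 i j = 1 := by
  have h : (PresentedGroup.mk rels5 ((FreeGroup.of i * FreeGroup.of j) ^ cox5 i j)) = 1 :=
    PresentedGroup.one_of_mem ⟨(i, j), rfl⟩
  simpa [v, PresentedGroup.of] using h

lemma v_sq (i : Fin 5) : v i * v i = 1 := by
  have h := rel5 i i
  simpa [cox5] using h

lemma v_inv (i : Fin 5) : (v i)⁻¹ = v i := inv_eq_of_mul_eq_one_left (v_sq i)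

lemma v_sq_assoc (i : Fin 5) (g : W5) : v i * (v i * g) = g := by
  rw [← mul_assoc, v_sq, one_mul]

lemma braid2 {x y : Fin 5} (h : cox5 x y = 2) : v x * v y = v y * v x := by
  have h1 := rel5 x y
  rw [h] at h1
  have h2 : v x * v y = (v x * v y)⁻¹ := by
    rw [eq_inv_iff_mul_eq_one, ← h1, pow_two]
  rw [h2, mul_inv_rev, v_inv, v_inv]

lemma braid3 {x y : Fin 5} (h : cox5 x y = 3) : v y * v x * v y = v x * v y * v x := by
  have h1 := rel5 x y
  rw [h] at h1
  have h2 : v x * v y * v x = (v y * v x * v y)⁻¹ := by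
    rw [eq_inv_iff_mul_eq_one, ← h1, pow_succ, pow_two]; simp only [mul_assoc]
  rw [h2]; simp only [mul_inv_rev, v_inv, mul_assoc]

lemma braid4 {x y : Fin 5} (h : cox5 x y = 4) :
    v x * v y * v x * v y = v y * v x * v y * v x := by
  have h1 := rel5 x y
  rw [h] at h1
  have h2 : v x * v y * v x * v y = (v x * v y * v x * v y)⁻¹ := by
    rw [eq_inv_iff_mul_eq_one, ← h1, pow_succ, pow_succ, pow_two]; simp only [mul_assoc]
  rw [h2]; simp only [mul_inv_rev, v_inv, mul_assoc]

lemma bring_sound (k : ℕ) : ∀ (x : Fin 5) (w r : List (Fin 5)),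
    bring k x w = some r → evw w = evw r * v x := by
  induction k with
  | zero => intro x w r h; simp [bring] at h
  | succ k ih =>
    intro x w r h
    cases w with
    | nil => simp [bring] at h
    | cons y w =>
      rw [bring] at h
      split_ifs at h with hyx
      · simp only [Option.some.injEq] at h
        subst h; subst hyx; rfl
      · split at h
        · rename_i hc
          simp only [Option.bind_eq_some_iff, Option.some.injEq] at h
          obtain ⟨w2, h2, rfl⟩ := h
          simp only [evw, ih _ _ _ h2, mul_assoc, braid2 hc]
        · rename_i hc
          simp only [Option.bind_eq_some_iff, Option.some.injEq] at h
          obtain ⟨w2, h2, w3, h3, rfl⟩ := h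
          have hb := braid3 hc
          simp only [mul_assoc] at hb
          simp only [evw, ih _ _ _ h2, ih _ _ _ h3, mul_assoc, hb]
        · rename_i hc
          simp only [Option.bind_eq_some_iff, Option.some.injEq] at h
          obtain ⟨w2, h2, w3, h3, w4, h4, rfl⟩ := h
          have hb := braid4 hc
          simp only [mul_assoc] at hb
          simp only [evw, ih _ _ _ h2, ih _ _ _ h3, ih _ _ _ h4, mul_assoc, hb]
        · simp at h

lemma redw_sound (w : List (Fin 5)) : evw (redw w) = evw w := by
  induction w with
  | nil => rfl
  | cons x w ih =>
    rw [redw]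
    split
    · rename_i r hr
      have := bring_sound _ _ _ _ hr
      rw [evw, ← ih, this, mul_assoc, v_sq, mul_one]
    · rw [evw, evw, ih]

lemma evw_append (w1 w2 : List (Fin 5)) : evw (w1 ++ w2) = evw w2 * evw w1 := by
  induction w1 with
  | nil => simp [evw]
  | cons x w ih => simp [evw, ih, mul_assoc]

lemma evw_reverse (w : List (Fin 5)) : evw w.reverse = (evw w)⁻¹ := by
  induction w with
  | nil => simp [evw]
  | cons x w ih => simp [evw, evw_append, ih, v_inv]

lemma evw_eq (w1 w2 : List (Fin 5)) (h : redw (w2.reverse ++ w1) = []) : evw w1 = evw w2 := by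
  have h1 := redw_sound (w2.reverse ++ w1)
  rw [h, evw_append, evw_reverse] at h1
  exact (mul_inv_eq_one.mp h1.symm)

/-! ### Four translations -/

def w0 : List (Fin 5) := [1, 2, 3, 2, 1, 4, 3, 2, 3, 4, 1, 2, 3, 2, 1, 0]
def w1 : List (Fin 5) := 1 :: (w0 ++ [1])
def w2 : List (Fin 5) := 2 :: (w1 ++ [2])
def w3 : List (Fin 5) := 3 :: (w2 ++ [3])
def gw : List (Fin 5) := [4, 3, 2, 3, 4, 1, 2, 3, 2, 1, 0]

lemma u_def : v 0 * sg5 * tu5 * sg5 = evw w0 := by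
  simp [sg5, tu5, w0, evw, mul_assoc]

lemma g_def : v 0 * sg5 * tu5 = evw gw := by
  simp [sg5, tu5, gw, evw, mul_assoc]

lemma g_sq : (v 0 * sg5 * tu5) ^ 2 = evw w2 * evw w3 := by
  rw [g_def, pow_two, ← evw_append, ← evw_append]
  exact evw_eq _ _ (by decide +kernel)

lemma comm01 : Commute (evw w0) (evw w1) := by
  rw [Commute, SemiconjBy, ← evw_append, ← evw_append]
  exact evw_eq _ _ (by decide +kernel)
lemma comm02 : Commute (evw w0) (evw w2) := by
  rw [Commute, SemiconjBy, ← evw_append, ← evw_append]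
  exact evw_eq _ _ (by decide +kernel)
lemma comm03 : Commute (evw w0) (evw w3) := by
  rw [Commute, SemiconjBy, ← evw_append, ← evw_append]
  exact evw_eq _ _ (by decide +kernel)
lemma comm12 : Commute (evw w1) (evw w2) := by
  rw [Commute, SemiconjBy, ← evw_append, ← evw_append]
  exact evw_eq _ _ (by decide +kernel)
lemma comm13 : Commute (evw w1) (evw w3) := by
  rw [Commute, SemiconjBy, ← evw_append, ← evw_append]
  exact evw_eq _ _ (by decide +kernel)
lemma comm23 : Commute (evw w2) (evw w3) := by
  rw [Commute, SemiconjBy, ← evw_append, ← evw_append]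
  exact evw_eq _ _ (by decide +kernel)

/-- The translation by the vector `n`, in the basis of the four translations above. -/
def th (n : ℤ × ℤ × ℤ × ℤ) : W5 :=
  evw w0 ^ n.1 * evw w1 ^ n.2.1 * evw w2 ^ n.2.2.1 * evw w3 ^ n.2.2.2

lemma th_add (m n : ℤ × ℤ × ℤ × ℤ) : th (m + n) = th m * th n := by
  obtain ⟨m0, m1, m2, m3⟩ := m
  obtain ⟨n0, n1, n2, n3⟩ := n
  have h1 := (comm01.zpow_zpow n0 m1).eq
  have h2 := (comm02.zpow_zpow n0 m2).eq
  have h3 := (comm03.zpow_zpow n0 m3).eq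
  have h4 := (comm12.zpow_zpow n1 m2).eq
  have h5 := (comm13.zpow_zpow n1 m3).eq
  have h6 := (comm23.zpow_zpow n2 m3).eq
  simp only [th, Prod.mk_add_mk, zpow_add]
  generalize evw w0 ^ n0 = a0 at *
  generalize evw w1 ^ n1 = a1 at *
  generalize evw w2 ^ n2 = a2 at *
  generalize evw w3 ^ n3 = a3 at *
  generalize evw w0 ^ m0 = b0 at *
  generalize evw w1 ^ m1 = b1 at *
  generalize evw w2 ^ m2 = b2 at *
  generalize evw w3 ^ m3 = b3 at *
  calc b0 * a0 * (b1 * a1) * (b2 * a2) * (b3 * a3)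
      = b0 * (a0 * b1) * (a1 * b2) * (a2 * b3) * a3 := by simp only [mul_assoc]
    _ = b0 * b1 * (a0 * b2) * (a1 * b3) * a2 * a3 := by rw [h1, h4, h6]; simp only [mul_assoc]
    _ = b0 * b1 * b2 * (a0 * b3) * a1 * a2 * a3 := by rw [h2, h5]; simp only [mul_assoc]
    _ = b0 * b1 * b2 * b3 * (a0 * a1 * a2 * a3) := by rw [h3]; simp only [mul_assoc]

lemma th_zero : th 0 = 1 := by simp [th]

/-- `th` as a homomorphism. -/
def thHom : Multiplicative (ℤ × ℤ × ℤ × ℤ) →* W5 where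
  toFun n := th n.toAdd
  map_one' := th_zero
  map_mul' _ _ := th_add _ _

lemma th_zsmul (k : ℤ) (n : ℤ × ℤ × ℤ × ℤ) : th (k • n) = th n ^ k :=
  map_zpow thHom (Multiplicative.ofAdd n) k

lemma th_neg (n : ℤ × ℤ × ℤ × ℤ) : th (-n) = (th n)⁻¹ :=
  map_inv thHom (Multiplicative.ofAdd n)

/-- Linear parts of the five generators. -/
def lin (i : Fin 5) (n : ℤ × ℤ × ℤ × ℤ) : ℤ × ℤ × ℤ × ℤ :=
  match i with
  | 0 => (-n.1 - n.2.1 - n.2.2.1 - n.2.2.2, n.2.1, n.2.2.1, n.2.2.2)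
  | 1 => (n.2.1, n.1, n.2.2.1, n.2.2.2)
  | 2 => (n.1, n.2.2.1 - n.2.2.2, n.2.1 + n.2.2.2, n.2.2.2)
  | 3 => (n.1, n.2.1, n.2.2.2, n.2.2.1)
  | 4 => (n.1 + n.2.2.2, n.2.1 + n.2.2.2, n.2.2.1 - n.2.2.2, -n.2.2.2)

lemma conj_eq (i : Fin 5) (w w' : List (Fin 5))
    (h : redw (w'.reverse ++ (i :: (w ++ [i]))) = []) : v i * evw w * (v i)⁻¹ = evw w' := by
  rw [← evw_eq _ _ h]
  simp [evw, evw_append, v_inv, mul_assoc]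

lemma conj_lift (i : Fin 5) (m0 m1 m2 m3 : ℤ × ℤ × ℤ × ℤ)
    (h0 : v i * evw w0 * (v i)⁻¹ = th m0) (h1 : v i * evw w1 * (v i)⁻¹ = th m1)
    (h2 : v i * evw w2 * (v i)⁻¹ = th m2) (h3 : v i * evw w3 * (v i)⁻¹ = th m3)
    (n : ℤ × ℤ × ℤ × ℤ) :
    v i * th n * (v i)⁻¹ = th (n.1 • m0 + n.2.1 • m1 + n.2.2.1 • m2 + n.2.2.2 • m3) := by
  simp only [th_add, th_zsmul, ← h0, ← h1, ← h2, ← h3, conj_zpow]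
  simp only [th]
  group

lemma th_e0 : th (1, 0, 0, 0) = evw w0 := by simp [th]
lemma th_e1 : th (0, 1, 0, 0) = evw w1 := by simp [th]
lemma th_e2 : th (0, 0, 1, 0) = evw w2 := by simp [th]
lemma th_e3 : th (0, 0, 0, 1) = evw w3 := by simp [th]

lemma conj_th (i : Fin 5) (n : ℤ × ℤ × ℤ × ℤ) : v i * th n * (v i)⁻¹ = th (lin i n) := by
  have key : ∀ (j : Fin 5) (m0 m1 m2 m3 : ℤ × ℤ × ℤ × ℤ) (x0 x1 x2 x3 : List (Fin 5)),
      redw (x0.reverse ++ (j :: (w0 ++ [j]))) = [] → redw (x1.reverse ++ (j :: (w1 ++ [j]))) = [] →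
      redw (x2.reverse ++ (j :: (w2 ++ [j]))) = [] → redw (x3.reverse ++ (j :: (w3 ++ [j]))) = [] →
      evw x0 = th m0 → evw x1 = th m1 → evw x2 = th m2 → evw x3 = th m3 →
      v j * th n * (v j)⁻¹ = th (n.1 • m0 + n.2.1 • m1 + n.2.2.1 • m2 + n.2.2.2 • m3) := by
    intro j m0 m1 m2 m3 x0 x1 x2 x3 a0 a1 a2 a3 b0 b1 b2 b3
    exact conj_lift j m0 m1 m2 m3 (by rw [conj_eq _ _ _ a0, b0]) (by rw [conj_eq _ _ _ a1, b1])
      (by rw [conj_eq _ _ _ a2, b2]) (by rw [conj_eq _ _ _ a3, b3]) n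
  fin_cases i
  · refine (key 0 (-1, 0, 0, 0) (-1, 1, 0, 0) (-1, 0, 1, 0) (-1, 0, 0, 1)
      w0.reverse (w1 ++ w0.reverse) (w2 ++ w0.reverse) (w3 ++ w0.reverse)
      (by decide +kernel) (by decide +kernel) (by decide +kernel) (by decide +kernel)
      ?_ ?_ ?_ ?_).trans ?_
    · simp [evw_reverse, th]
    · simp [evw_reverse, th, evw_append]
    · simp [evw_reverse, th, evw_append]
    · simp [evw_reverse, th, evw_append]
    · congr 1; ext <;> simp [lin]; ring
  · refine (key 1 (0, 1, 0, 0) (1, 0, 0, 0) (0, 0, 1, 0) (0, 0, 0, 1)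
      w1 w0 w2 w3
      (by decide +kernel) (by decide +kernel) (by decide +kernel) (by decide +kernel)
      ?_ ?_ ?_ ?_).trans ?_
    · simp [th]
    · simp [th]
    · simp [th]
    · simp [th]
    · congr 1; ext <;> simp [lin]
  · refine (key 2 (1, 0, 0, 0) (0, 0, 1, 0) (0, 1, 0, 0) (0, -1, 1, 1)
      w0 w2 w1 (w3 ++ w2 ++ w1.reverse)
      (by decide +kernel) (by decide +kernel) (by decide +kernel) (by decide +kernel)
      ?_ ?_ ?_ ?_).trans ?_
    · simp [th]
    · simp [th]
    · simp [th]
    · simp [th, evw_append, evw_reverse, mul_assoc]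
    · congr 1; ext <;> simp [lin]; ring
  · refine (key 3 (1, 0, 0, 0) (0, 1, 0, 0) (0, 0, 0, 1) (0, 0, 1, 0)
      w0 w1 w3 w2
      (by decide +kernel) (by decide +kernel) (by decide +kernel) (by decide +kernel)
      ?_ ?_ ?_ ?_).trans ?_
    · simp [th]
    · simp [th]
    · simp [th]
    · simp [th]
    · congr 1; ext <;> simp [lin]
  · refine (key 4 (1, 0, 0, 0) (0, 1, 0, 0) (0, 0, 1, 0) (1, 1, -1, -1)
      w0 w1 w2 (w3.reverse ++ w2.reverse ++ w1 ++ w0)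
      (by decide +kernel) (by decide +kernel) (by decide +kernel) (by decide +kernel)
      ?_ ?_ ?_ ?_).trans ?_
    · simp [th]
    · simp [th]
    · simp [th]
    · simp [th, evw_append, evw_reverse, mul_assoc]
    · congr 1; ext <;> simp [lin]; ring

/-! ### The affine action, showing that `th` is injective -/

/-- Affine action of the generators on the lattice. -/
def aff (i : Fin 5) (n : ℤ × ℤ × ℤ × ℤ) : ℤ × ℤ × ℤ × ℤ :=
  lin i n + (if i = 0 then 1 else 0, 0, 0, 0)

lemma aff_aff (i : Fin 5) (n : ℤ × ℤ × ℤ × ℤ) : aff i (aff i n) = n := by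
  obtain ⟨p, q, r, s⟩ := n
  fin_cases i <;> simp [aff, lin] <;> ring

/-- The same as a permutation. -/
def affP (i : Fin 5) : Equiv.Perm (ℤ × ℤ × ℤ × ℤ) where
  toFun := aff i
  invFun := aff i
  left_inv := aff_aff i
  right_inv := aff_aff i

lemma affP_apply (i : Fin 5) (n : ℤ × ℤ × ℤ × ℤ) : affP i n = aff i n := rfl

lemma affP_rel (i j : Fin 5) : (affP i * affP j) ^ cox5 i j = 1 := by
  ext1 n
  obtain ⟨p, q, r, s⟩ := n
  fin_cases i <;> fin_cases j <;>
    simp [cox5, pow_succ, Equiv.Perm.mul_apply, affP_apply, aff, lin] <;>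
    (try constructor) <;> ring_nf <;> simp

/-- The affine representation of `W5`. -/
def rep : W5 →* Equiv.Perm (ℤ × ℤ × ℤ × ℤ) :=
  PresentedGroup.toGroup (f := affP) (by
    rintro _ ⟨⟨i, j⟩, rfl⟩
    simpa using affP_rel i j)

lemma rep_v (i : Fin 5) : rep (v i) = affP i := PresentedGroup.toGroup.of _

/-- Affine action of a reversed word. -/
def actw : List (Fin 5) → ℤ × ℤ × ℤ × ℤ → ℤ × ℤ × ℤ × ℤ
  | [], n => n
  | x :: w, n => actw w (aff x n)

lemma rep_evw (w : List (Fin 5)) (n : ℤ × ℤ × ℤ × ℤ) : rep (evw w) n = actw w n := by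
  induction w generalizing n with
  | nil => simp [evw, actw]
  | cons x w ih => simp [evw, actw, rep_v, ih, affP_apply]

lemma rep_w0 : rep (evw w0) = Equiv.addRight ((1, 0, 0, 0) : ℤ × ℤ × ℤ × ℤ) := by
  ext1 n
  obtain ⟨p, q, r, s⟩ := n
  simp only [rep_evw, w0, actw, aff, lin]
  simp
  ring_nf
  simp

lemma rep_w1 : rep (evw w1) = Equiv.addRight ((0, 1, 0, 0) : ℤ × ℤ × ℤ × ℤ) := by
  have h : evw w1 = v 1 * evw w0 * v 1 := by simp [w1, evw, evw_append, mul_assoc]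
  ext1 n
  obtain ⟨p, q, r, s⟩ := n
  simp [h, rep_w0, rep_v, affP_apply, aff, lin]

lemma rep_w2 : rep (evw w2) = Equiv.addRight ((0, 0, 1, 0) : ℤ × ℤ × ℤ × ℤ) := by
  have h : evw w2 = v 2 * evw w1 * v 2 := by simp [w2, evw, evw_append, mul_assoc]
  ext1 n
  obtain ⟨p, q, r, s⟩ := n
  simp [h, rep_w1, rep_v, affP_apply, aff, lin]
  ring

lemma rep_w3 : rep (evw w3) = Equiv.addRight ((0, 0, 0, 1) : ℤ × ℤ × ℤ × ℤ) := by
  have h : evw w3 = v 3 * evw w2 * v 3 := by simp [w3, evw, evw_append, mul_assoc]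
  ext1 n
  obtain ⟨p, q, r, s⟩ := n
  simp [h, rep_w2, rep_v, affP_apply, aff, lin]

lemma addRight_zpow (x : ℤ × ℤ × ℤ × ℤ) (k : ℤ) :
    (Equiv.addRight x) ^ k = Equiv.addRight (k • x) := by
  have h : ∀ n : ℕ, (Equiv.addRight x) ^ n = Equiv.addRight (n • x) := by
    intro n
    induction n with
    | zero => ext1 y; simp
    | succ n ih =>
      rw [pow_succ, ih]
      ext1 y
      simp only [Equiv.Perm.mul_apply, Equiv.coe_addRight, succ_nsmul]
      abel
  obtain ⟨n, rfl | rfl⟩ := k.eq_nat_or_neg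
  · rw [zpow_natCast, h, natCast_zsmul]
  · rw [zpow_neg, zpow_natCast, h, inv_eq_iff_mul_eq_one]
    ext1 y
    simp [Equiv.Perm.mul_apply, Equiv.coe_addRight, -Prod.smul_mk]

lemma rep_th (n : ℤ × ℤ × ℤ × ℤ) : rep (th n) 0 = n := by
  simp only [th, map_mul, map_zpow, rep_w0, rep_w1, rep_w2, rep_w3, addRight_zpow]
  simp

lemma th_inj {m n : ℤ × ℤ × ℤ × ℤ} (h : th m = th n) : m = n := by
  rw [← rep_th m, h, rep_th]

/-! ### The two families of normal subgroups -/

/-- Translations by a lattice stable under the generators. -/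
def latSub (L : AddSubgroup (ℤ × ℤ × ℤ × ℤ)) : Subgroup W5 :=
  (AddSubgroup.toSubgroup L).map thHom

lemma mem_latSub {L : AddSubgroup (ℤ × ℤ × ℤ × ℤ)} {g : W5} :
    g ∈ latSub L ↔ ∃ n ∈ L, th n = g := Iff.rfl

lemma v_closure : Subgroup.closure (Set.range v) = ⊤ := PresentedGroup.closure_range_of rels5

lemma latSub_normal (L : AddSubgroup (ℤ × ℤ × ℤ × ℤ)) (hL : ∀ i, ∀ n ∈ L, lin i n ∈ L) :
    (latSub L).Normal := by
  have fwd : ∀ i, ∀ x ∈ latSub L, v i * x * (v i)⁻¹ ∈ latSub L := by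
    intro i x hx
    obtain ⟨n, hn, rfl⟩ := mem_latSub.mp hx
    exact mem_latSub.mpr ⟨_, hL i n hn, (conj_th i n).symm⟩
  have hle : Subgroup.closure (Set.range v) ≤ Subgroup.normalizer (latSub L : Set W5) := by
    rw [Subgroup.closure_le]
    rintro _ ⟨i, rfl⟩
    rw [SetLike.mem_coe, Subgroup.mem_normalizer_iff]
    refine fun x => ⟨fwd i x, fun hx => ?_⟩
    have := fwd i _ hx
    simpa [v_inv, mul_assoc, v_sq, v_sq_assoc] using this
  rw [v_closure, top_le_iff] at hle
  exact Subgroup.normalizer_eq_top_iff.mp hle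

lemma lin_zsmul (i : Fin 5) (k : ℤ) (n : ℤ × ℤ × ℤ × ℤ) : lin i (k • n) = k • lin i n := by
  obtain ⟨p, q, r, s⟩ := n
  fin_cases i <;> simp [lin] <;> ring_nf <;> simp

/-- The sublattice of index four. -/
def latD : AddSubgroup (ℤ × ℤ × ℤ × ℤ) where
  carrier := {n | 2 ∣ n.2.1 + n.2.2.1 + n.2.2.2 ∧ 2 ∣ n.1 + n.2.2.1 + n.2.2.2}
  zero_mem' := by simp
  add_mem' := by
    rintro ⟨p, q, r, s⟩ ⟨p', q', r', s'⟩ ⟨h1, h2⟩ ⟨h3, h4⟩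
    simp only [Set.mem_ofPred_eq, Prod.mk_add_mk] at *
    omega
  neg_mem' := by
    rintro ⟨p, q, r, s⟩ ⟨h1, h2⟩
    simp only [Set.mem_ofPred_eq, Prod.neg_mk] at *
    omega

lemma mem_latD {n : ℤ × ℤ × ℤ × ℤ} :
    n ∈ latD ↔ 2 ∣ n.2.1 + n.2.2.1 + n.2.2.2 ∧ 2 ∣ n.1 + n.2.2.1 + n.2.2.2 := Iff.rfl

lemma lin_latD (i : Fin 5) (n : ℤ × ℤ × ℤ × ℤ) (hn : n ∈ latD) : lin i n ∈ latD := by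
  obtain ⟨p, q, r, s⟩ := n
  rw [mem_latD] at *
  fin_cases i <;> simp [lin] at * <;> omega

/-- The multiple `k L` of a lattice. -/
def mulLat (k : ℕ) (L : AddSubgroup (ℤ × ℤ × ℤ × ℤ)) : AddSubgroup (ℤ × ℤ × ℤ × ℤ) :=
  L.map (zsmulAddGroupHom (k : ℤ))

lemma mem_mulLat {k : ℕ} {L : AddSubgroup (ℤ × ℤ × ℤ × ℤ)} {n : ℤ × ℤ × ℤ × ℤ} :
    n ∈ mulLat k L ↔ ∃ m ∈ L, (k : ℤ) • m = n := Iff.rfl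

lemma mulLat_normal (k : ℕ) (L : AddSubgroup (ℤ × ℤ × ℤ × ℤ))
    (hL : ∀ i, ∀ n ∈ L, lin i n ∈ L) : (latSub (mulLat k L)).Normal := by
  refine latSub_normal _ ?_
  rintro i _ ⟨m, hm, rfl⟩
  exact mem_mulLat.mpr ⟨lin i m, hL i m hm, (lin_zsmul i k m).symm⟩

lemma th_lin_mem {N : Subgroup W5} (hN : N.Normal) (i : Fin 5) {k : ℤ} {n : ℤ × ℤ × ℤ × ℤ}
    (h : th (k • n) ∈ N) : th (k • lin i n) ∈ N := by
  rw [← lin_zsmul, ← conj_th]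
  exact hN.conj_mem _ h _

lemma th_comb_mem {N : Subgroup W5} {k : ℤ} {m0 m1 m2 m3 : ℤ × ℤ × ℤ × ℤ}
    (h0 : th (k • m0) ∈ N) (h1 : th (k • m1) ∈ N) (h2 : th (k • m2) ∈ N) (h3 : th (k • m3) ∈ N)
    (a b c d : ℤ) : th (k • (a • m0 + b • m1 + c • m2 + d • m3)) ∈ N := by
  have e : k • (a • m0 + b • m1 + c • m2 + d • m3)
      = a • (k • m0) + b • (k • m1) + c • (k • m2) + d • (k • m3) := by
    simp only [smul_add, smul_comm k]
  rw [e, th_add, th_add, th_add, th_zsmul a, th_zsmul b, th_zsmul c, th_zsmul d]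
  exact N.mul_mem (N.mul_mem (N.mul_mem (N.zpow_mem h0 a) (N.zpow_mem h1 b)) (N.zpow_mem h2 c))
    (N.zpow_mem h3 d)

lemma closureH (t : ℕ) :
    Subgroup.normalClosure ({(v 0 * sg5 * tu5 * sg5) ^ t} : Set W5) = latSub (mulLat t ⊤) := by
  have hgen : (v 0 * sg5 * tu5 * sg5) ^ t = th ((t : ℤ) • (1, 0, 0, 0)) := by
    rw [u_def, th_zsmul, th_e0, zpow_natCast]
  rw [hgen]
  apply le_antisymm
  · have := mulLat_normal t ⊤ (fun _ _ _ => trivial)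
    apply Subgroup.normalClosure_le_normal
    rw [Set.singleton_subset_iff]
    exact mem_latSub.mpr ⟨_, mem_mulLat.mpr ⟨_, trivial, rfl⟩, rfl⟩
  · rintro _ ⟨_, ⟨⟨p, q, r, s⟩, -, rfl⟩, rfl⟩
    have hN := Subgroup.normalClosure_normal (s := {th ((t : ℤ) • (1, 0, 0, 0))})
    have h0 : th ((t : ℤ) • (1, 0, 0, 0)) ∈
        Subgroup.normalClosure {th ((t : ℤ) • (1, 0, 0, 0))} :=
      Subgroup.subset_normalClosure rfl
    have h1 := th_lin_mem hN 1 h0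
    have h2 := th_lin_mem hN 2 h1
    have h3 := th_lin_mem hN 3 h2
    have := th_comb_mem h0 h1 h2 h3 p q r s
    change th ((t : ℤ) • (p, q, r, s)) ∈ _
    simpa [lin] using this

lemma closureG (s : ℕ) :
    Subgroup.normalClosure ({(v 0 * sg5 * tu5) ^ (2 * s)} : Set W5)
      = latSub (mulLat s latD) := by
  have hgen : (v 0 * sg5 * tu5) ^ (2 * s) = th ((s : ℤ) • (0, 0, 1, 1)) := by
    rw [pow_mul, g_sq, th_zsmul, zpow_natCast]
    simp [th]
  rw [hgen]
  apply le_antisymm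
  · have := mulLat_normal s latD lin_latD
    apply Subgroup.normalClosure_le_normal
    rw [Set.singleton_subset_iff]
    exact mem_latSub.mpr ⟨_, mem_mulLat.mpr ⟨_, by simp [mem_latD], rfl⟩, rfl⟩
  · rintro _ ⟨_, ⟨⟨n0, n1, n2, n3⟩, hn, rfl⟩, rfl⟩
    have hN := Subgroup.normalClosure_normal (s := {th ((s : ℤ) • (0, 0, 1, 1))})
    have h0 : th ((s : ℤ) • (0, 0, 1, 1)) ∈
        Subgroup.normalClosure {th ((s : ℤ) • (0, 0, 1, 1))} :=
      Subgroup.subset_normalClosure rfl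
    have h2 := th_lin_mem hN 3 (th_lin_mem hN 4 h0)
    have h1 := th_lin_mem hN 2 h2
    have h3 := th_lin_mem hN 3 h1
    obtain ⟨⟨a, ha⟩, ⟨b, hb⟩⟩ := mem_latD.mp hn
    simp only at ha hb
    have := th_comb_mem h0 h1 h2 h3 a (n2 + (n0 + n1) / 2 - a) ((n0 + n1) / 2) (n3 - a)
    change th ((s : ℤ) • (n0, n1, n2, n3)) ∈ _
    convert this using 3
    simp only [lin, Prod.smul_mk, Prod.mk_add_mk, smul_eq_mul, Prod.mk.injEq]
    refine ⟨?_, ?_, ?_, ?_⟩ <;> omega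

/-! ### Intersections -/

lemma inf_latSub (L M : AddSubgroup (ℤ × ℤ × ℤ × ℤ)) :
    latSub L ⊓ latSub M = latSub (L ⊓ M) := by
  ext g
  constructor
  · rintro ⟨⟨m, hm, rfl⟩, ⟨n, hn, hmn⟩⟩
    have : n = m := th_inj hmn
    subst this
    exact ⟨n, ⟨hm, hn⟩, rfl⟩
  · rintro ⟨m, ⟨hm, hm'⟩, rfl⟩
    exact ⟨⟨m, hm, rfl⟩, ⟨m, hm', rfl⟩⟩

lemma mem_lcm {s t k : ℕ} (hk : Nat.lcm s t = s * k) (hs : s ≠ 0) {m m' : ℤ × ℤ × ℤ × ℤ}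
    (h : (t : ℤ) • m' = (s : ℤ) • m) : ∃ x, m = (k : ℤ) • x := by
  have key : ∀ a b : ℤ, (t : ℤ) * a = (s : ℤ) * b → (k : ℤ) ∣ b := by
    intro a b hab
    have h1 : ((Nat.lcm s t : ℕ) : ℤ) ∣ (s : ℤ) * b := by
      rw [← Int.natAbs_dvd_natAbs, Int.natAbs_natCast]
      apply Nat.lcm_dvd
      · rw [← Int.natCast_dvd]; exact Dvd.intro _ rfl
      · rw [← Int.natCast_dvd]; exact Dvd.intro _ hab
    rw [hk, Nat.cast_mul] at h1
    exact Int.dvd_of_mul_dvd_mul_left (by exact_mod_cast hs) h1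
  obtain ⟨a, b, c, d⟩ := m
  obtain ⟨a', b', c', d'⟩ := m'
  simp only [Prod.smul_mk, smul_eq_mul, Prod.mk.injEq] at h
  obtain ⟨x, hx⟩ := key _ _ h.1
  obtain ⟨y, hy⟩ := key _ _ h.2.1
  obtain ⟨z, hz⟩ := key _ _ h.2.2.1
  obtain ⟨w, hw⟩ := key _ _ h.2.2.2
  exact ⟨(x, y, z, w), by simp [hx, hy, hz, hw]⟩

lemma latD_odd {k : ℕ} (hk : ¬ 2 ∣ k) {x : ℤ × ℤ × ℤ × ℤ} (h : (k : ℤ) • x ∈ latD) :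
    x ∈ latD := by
  have key : ∀ a : ℤ, 2 ∣ (k : ℤ) * a → 2 ∣ a := by
    intro a ha
    rcases Int.Prime.dvd_mul' Nat.prime_two (by exact_mod_cast ha) with h | h
    · exact absurd (by exact_mod_cast h) hk
    · exact_mod_cast h
  obtain ⟨a, b, c, d⟩ := x
  rw [mem_latD] at *
  simp only [Prod.smul_mk, smul_eq_mul] at *
  exact ⟨key _ (by simpa only [mul_add] using h.1), key _ (by simpa only [mul_add] using h.2)⟩

lemma latD_even {k : ℕ} (hk : 2 ∣ k) (x : ℤ × ℤ × ℤ × ℤ) : (k : ℤ) • x ∈ latD := by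
  obtain ⟨j, rfl⟩ := hk
  obtain ⟨a, b, c, d⟩ := x
  rw [mem_latD]
  simp only [Prod.smul_mk, smul_eq_mul, ← mul_add]
  push_cast
  simp only [mul_assoc]
  exact ⟨Dvd.intro _ rfl, Dvd.intro _ rfl⟩

lemma inf_odd {s t k : ℕ} (hk : Nat.lcm s t = s * k) (hs : s ≠ 0) (h2 : ¬ 2 ∣ k) :
    mulLat s latD ⊓ mulLat t ⊤ = mulLat (Nat.lcm s t) latD := by
  ext n
  constructor
  · rintro ⟨⟨m, hm, rfl⟩, ⟨m', -, h⟩⟩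
    obtain ⟨x, rfl⟩ := mem_lcm hk hs h
    exact mem_mulLat.mpr ⟨x, latD_odd h2 hm, by rw [hk, Nat.cast_mul, mul_smul]; rfl⟩
  · rintro ⟨m, hm, rfl⟩
    refine ⟨mem_mulLat.mpr ⟨(k : ℤ) • m, latD.zsmul_mem hm _, ?_⟩, ?_⟩
    · rw [hk, Nat.cast_mul, ← mul_smul]; rfl
    · obtain ⟨j, hj⟩ := Nat.dvd_lcm_right s t
      exact mem_mulLat.mpr ⟨(j : ℤ) • m, trivial, by rw [hj, Nat.cast_mul, ← mul_smul]; rfl⟩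

lemma inf_even {s t k : ℕ} (hk : Nat.lcm s t = s * k) (hs : s ≠ 0) (h2 : 2 ∣ k) :
    mulLat s latD ⊓ mulLat t ⊤ = mulLat (Nat.lcm s t) ⊤ := by
  ext n
  constructor
  · rintro ⟨⟨m, hm, rfl⟩, ⟨m', -, h⟩⟩
    obtain ⟨x, rfl⟩ := mem_lcm hk hs h
    exact mem_mulLat.mpr ⟨x, trivial, by rw [hk, Nat.cast_mul, mul_smul]; rfl⟩
  · rintro ⟨m, hm, rfl⟩
    refine ⟨mem_mulLat.mpr ⟨(k : ℤ) • m, latD_even h2 m, ?_⟩, ?_⟩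
    · rw [hk, Nat.cast_mul, ← mul_smul]; rfl
    · obtain ⟨j, hj⟩ := Nat.dvd_lcm_right s t
      exact mem_mulLat.mpr ⟨(j : ℤ) • m, trivial, by rw [hj, Nat.cast_mul, ← mul_smul]; rfl⟩

lemma lcm_crit {s t k : ℕ} (hk : Nat.lcm s t = s * k) (hs : 2 ≤ s) (ht : 2 ≤ t) :
    Nat.lcm (2 * s) t = 2 * Nat.lcm s t ↔ ¬ 2 ∣ k := by
  have hpos : 0 < Nat.lcm s t := Nat.lcm_pos (by omega) (by omega)
  constructor
  · rintro h ⟨j, rfl⟩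
    have h1 : Nat.lcm (2 * s) t ∣ Nat.lcm s t :=
      Nat.lcm_dvd ⟨j, by rw [hk]; ring⟩ (Nat.dvd_lcm_right s t)
    have := Nat.le_of_dvd hpos h1
    omega
  · intro h
    have h1 : Nat.lcm s t ∣ Nat.lcm (2 * s) t :=
      Nat.lcm_dvd ((Dvd.intro_left 2 rfl).trans (Nat.dvd_lcm_left _ _)) (Nat.dvd_lcm_right _ _)
    have h2 : Nat.lcm (2 * s) t ∣ 2 * Nat.lcm s t :=
      Nat.lcm_dvd (Nat.mul_dvd_mul_left 2 (Nat.dvd_lcm_left s t))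
        ((Nat.dvd_lcm_right s t).trans (Dvd.intro_left 2 rfl))
    obtain ⟨q, hq⟩ := h1
    rw [hq, mul_comm 2] at h2
    have h3 : q ∣ 2 := Nat.dvd_of_mul_dvd_mul_left hpos h2
    rcases (Nat.dvd_prime Nat.prime_two).mp h3 with rfl | rfl
    · exfalso
      apply h
      have h4 : 2 * s ∣ s * k := by
        rw [← hk, ← mul_one (Nat.lcm s t), ← hq]; exact Nat.dvd_lcm_left _ _
      rw [mul_comm 2] at h4
      exact Nat.dvd_of_mul_dvd_mul_left (by omega) h4
    · rw [hq, mul_comm]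

/-! ### The mix as a quotient -/

lemma mix_eq_range (s t : ℕ) :
    Subgroup.closure (Set.range fun i : Fin 5 => ((piG s (v i), piH t (v i)) : Gq s × Hq t))
      = ((piG s).prod (piH t)).range := by
  rw [MonoidHom.range_eq_map, ← v_closure, MonoidHom.map_closure, ← Set.range_comp]
  rfl

lemma mix_ker (s t : ℕ) : ((piG s).prod (piH t)).ker
    = Subgroup.normalClosure ({(v 0 * sg5 * tu5) ^ (2 * s)} : Set W5) ⊓
      Subgroup.normalClosure ({(v 0 * sg5 * tu5 * sg5) ^ t} : Set W5) := by
  rw [MonoidHom.ker_prod, piG, piH, QuotientGroup.ker_mk', QuotientGroup.ker_mk']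

lemma mix_iso (s t : ℕ) (N : Subgroup W5) [N.Normal]
    (h : Subgroup.normalClosure ({(v 0 * sg5 * tu5) ^ (2 * s)} : Set W5) ⊓
      Subgroup.normalClosure ({(v 0 * sg5 * tu5 * sg5) ^ t} : Set W5) = N) :
    Nonempty ((Subgroup.closure
      (Set.range fun i : Fin 5 => ((piG s (v i), piH t (v i)) : Gq s × Hq t))) ≃* W5 ⧸ N) := by
  rw [mix_eq_range]
  exact ⟨(QuotientGroup.quotientKerEquivRange _).symm.trans
    (QuotientGroup.quotientMulEquivOfEq ((mix_ker s t).trans h))⟩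

/-- The mix of [3,3,4,3]_{(s,s,0,0)} and [3,3,4,3]_{(t,0,0,0)} is
[3,3,4,3]_{(l,l,0,0)} if lcm(2s,t) = 2l, and [3,3,4,3]_{(l,0,0,0)} otherwise,
where l = lcm(s,t). -/
theorem stmt_18 (s t : ℕ) (hs : 2 ≤ s) (ht : 2 ≤ t) :
    (Nat.lcm (2 * s) t = 2 * Nat.lcm s t →
      Nonempty
        ((Subgroup.closure
            (Set.range fun i : Fin 5 => ((piG s (v i), piH t (v i)) : Gq s × Hq t))) ≃*
          Gq (Nat.lcm s t))) ∧
    (Nat.lcm (2 * s) t ≠ 2 * Nat.lcm s t →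
      Nonempty
        ((Subgroup.closure
            (Set.range fun i : Fin 5 => ((piG s (v i), piH t (v i)) : Gq s × Hq t))) ≃*
          Hq (Nat.lcm s t))) := by
  obtain ⟨k, hk⟩ := Nat.dvd_lcm_left s t
  have hs0 : s ≠ 0 := by omega
  constructor
  · intro h
    apply mix_iso
    rw [closureG, closureH, closureG, inf_latSub, inf_odd hk hs0 ((lcm_crit hk hs ht).mp h)]
  · intro h
    apply mix_iso
    have h2 : 2 ∣ k := by
      by_contra h2
      exact h ((lcm_crit hk hs ht).mpr h2)
    rw [closureG, closureH, closureH, inf_latSub, inf_even hk hs0 h2]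
end

section
/- There exist a finite group Q and a surjective group homomorphism p from W onto Q such that: (i) the subgroup of Q generated by p(a), p(b), p(c), p(d), p(e) is isomorphic to [3,3,4,3]_{(6,6,0,0)} (the quotient of the Coxeter group [3,3,4,3] on a,...,e by the normal closure of (a*sigma*tau)^{12}); (ii) the subgroup generated by p(b), p(c), p(d), p(e), p(f) is isomorphic to [3,4,3,3]_{(3,0,0,0)} (the quotient of the Coxeter group [3,4,3,3] on b,...,f by the normal closure of (f*tau*sigma*tau)^3); and (iii) the intersection property holds: for all subsets I, J of {a,b,c,d,e,f}, the subgroup generated by p(I) intersected with the subgroup generated by p(J) equals the subgroup generated by p(I ∩ J). (Hence a finite locally toroidal polytope of type {{3,3,4,3}_{(6,6,0,0)}, {3,4,3,3}_{(3,0,0,0)}} exists.) -/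
/-- Coxeter matrix of the string diagram [3,3,4,3,3] on generators a,b,c,d,e,f = 0..5. -/
def cox6 : Fin 6 → Fin 6 → ℕ := fun i j =>
  if i = j then 1
  else if (i : ℕ) + 1 = (j : ℕ) ∨ (j : ℕ) + 1 = (i : ℕ) then
    (if ((i : ℕ) = 2 ∧ (j : ℕ) = 3) ∨ ((i : ℕ) = 3 ∧ (j : ℕ) = 2) then 4 else 3)
  else 2

def rels6 : Set (FreeGroup (Fin 6)) :=
  Set.range fun p : Fin 6 × Fin 6 => (FreeGroup.of p.1 * FreeGroup.of p.2) ^ cox6 p.1 p.2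

/-- The Coxeter group of type [3,3,4,3,3]. -/
abbrev W : Type := PresentedGroup rels6

/-- The generators a,b,c,d,e,f of W, as w 0, ..., w 5. -/
def w (i : Fin 6) : W := PresentedGroup.of i

/-- sigma = d^(cb) = b*c*d*c*b. -/
def sg : W := w 1 * w 2 * w 3 * w 2 * w 1
/-- tau = c^(de) = e*d*c*d*e. -/
def tu : W := w 4 * w 3 * w 2 * w 3 * w 4

/-- Coxeter matrix of the string diagram [3,4,3,3] on generators b,c,d,e,f = 0..4. -/
def cox5d : Fin 5 → Fin 5 → ℕ := fun i j =>
  if i = j then 1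
  else if (i : ℕ) + 1 = (j : ℕ) ∨ (j : ℕ) + 1 = (i : ℕ) then
    (if ((i : ℕ) = 1 ∧ (j : ℕ) = 2) ∨ ((i : ℕ) = 2 ∧ (j : ℕ) = 1) then 4 else 3)
  else 2

def rels5d : Set (FreeGroup (Fin 5)) :=
  Set.range fun p : Fin 5 × Fin 5 => (FreeGroup.of p.1 * FreeGroup.of p.2) ^ cox5d p.1 p.2

/-- The Coxeter group of type [3,4,3,3], generators b,c,d,e,f = 0..4. -/
abbrev V5 : Type := PresentedGroup rels5d

def u (i : Fin 5) : V5 := PresentedGroup.of i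

/-- sigma = b*c*d*c*b (in terms of b,c,d,e,f). -/
def sgd : V5 := u 0 * u 1 * u 2 * u 1 * u 0
/-- tau = e*d*c*d*e (in terms of b,c,d,e,f). -/
def tud : V5 := u 3 * u 2 * u 1 * u 2 * u 3

/-- [3,4,3,3]_{(3,0,0,0)} : the quotient of [3,4,3,3] by the normal closure of (f τ σ τ)^3. -/
abbrev Vq : Type := V5 ⧸ Subgroup.normalClosure ({(u 4 * tud * sgd * tud) ^ 3} : Set V5)

/-! ## Words and rewriting -/

namespace Loc

/-- Coxeter matrix on natural number indices. -/
def mm (i j : ℕ) : ℕ :=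
  if i = j then 1
  else if i + 1 = j ∨ j + 1 = i then
    (if (i = 2 ∧ j = 3) ∨ (i = 3 ∧ j = 2) then 4 else 3)
  else 2

/-- Value of a word in a group. -/
def ev {G : Type*} [Group G] (s : ℕ → G) (w : List ℕ) : G := (w.map s).prod

section evlemmas
variable {G : Type*} [Group G] (s : ℕ → G)

@[simp] lemma ev_nil : ev s [] = 1 := rfl
@[simp] lemma ev_cons (i : ℕ) (w : List ℕ) : ev s (i :: w) = s i * ev s w := by simp [ev]
@[simp] lemma ev_append (a b : List ℕ) : ev s (a ++ b) = ev s a * ev s b := by simp [ev]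

lemma ev_map {H : Type*} [Group H] (φ : G →* H) (t : ℕ → H) (w : List ℕ)
    (h : ∀ x ∈ w, φ (s x) = t x) : φ (ev s w) = ev t w := by
  induction w with
  | nil => simp
  | cons a w ih =>
    simp only [ev_cons, map_mul]
    rw [h a (by simp), ih (fun x hx => h x (by simp [hx]))]

lemma ev_mem (I : Set ℕ) (w : List ℕ) (h : ∀ x ∈ w, x ∈ I) :
    ev s w ∈ Subgroup.closure (s '' I) := by
  induction w with
  | nil => simp
  | cons a w ih =>
    rw [ev_cons]
    exact mul_mem (Subgroup.subset_closure ⟨a, h a (by simp), rfl⟩)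
      (ih (fun x hx => h x (by simp [hx])))

lemma ev_reverse (w : List ℕ) (h : ∀ x ∈ w, s x * s x = 1) :
    ev s w.reverse = (ev s w)⁻¹ := by
  induction w with
  | nil => simp
  | cons a w ih =>
    have ha : (s a)⁻¹ = s a := inv_eq_of_mul_eq_one_left (h a (by simp))
    simp [ih (fun x hx => h x (by simp [hx])), ha]

end evlemmas

/-- Repeated word. -/
def pw (w : List ℕ) : ℕ → List ℕ
  | 0 => []
  | n + 1 => w ++ pw w n

lemma ev_pw {G : Type*} [Group G] (s : ℕ → G) (w : List ℕ) (n : ℕ) :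
    ev s (pw w n) = ev s w ^ n := by
  induction n with
  | zero => simp [pw]
  | succ n ih => simp [pw, ih, pow_succ']

lemma mem_pw {w : List ℕ} {n x : ℕ} (h : x ∈ pw w n) : x ∈ w := by
  induction n with
  | zero => simp [pw] at h
  | succ n ih =>
    simp only [pw, List.mem_append] at h
    exact h.elim id ih

/-- Alternating word. -/
def alt : ℕ → ℕ → ℕ → List ℕ
  | _, _, 0 => []
  | i, j, n + 1 => i :: alt j i n

/-- Boolean equality of words. -/
def leq : List ℕ → List ℕ → Bool
  | [], [] => true
  | [], _ :: _ => false
  | _ :: _, [] => false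
  | a :: s, b :: t => cond (Nat.beq a b) (leq s t) false

lemma leq_eq : ∀ {a b : List ℕ}, leq a b = true → a = b
  | [], [], _ => rfl
  | [], _ :: _, h => by simp [leq] at h
  | _ :: _, [], h => by simp [leq] at h
  | a :: s, b :: t, h => by
    simp only [leq] at h
    cases hb : Nat.beq a b with
    | false => simp [hb] at h
    | true =>
      rw [hb] at h
      rw [Nat.eq_of_beq_eq_true hb, leq_eq h]

/-- Membership test for letters. -/
def lmem (a : ℕ) : List ℕ → Bool
  | [] => false
  | b :: t => cond (Nat.beq a b) true (lmem a t)

lemma lmem_mem {a : ℕ} : ∀ {l : List ℕ}, lmem a l = true → a ∈ l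
  | [], h => by simp [lmem] at h
  | b :: t, h => by
    simp only [lmem] at h
    cases hb : Nat.beq a b with
    | true => rw [Nat.eq_of_beq_eq_true hb]; simp
    | false =>
      rw [hb] at h
      exact List.mem_cons_of_mem _ (lmem_mem h)

/-- A rewriting rule: reversed left-hand side, right-hand side, and a certificate word. -/
structure Rule where
  lr : List ℕ
  r : List ℕ
  v : List ℕ

/-- Remove an initial segment. -/
def strip : List ℕ → List ℕ → Option (List ℕ)
  | [], st => some st
  | _ :: _, [] => none
  | a :: p, b :: t => cond (Nat.beq a b) (strip p t) none

lemma strip_eq : ∀ {p st t : List ℕ}, strip p st = some t → st = p ++ t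
  | [], st, t, h => by simpa [strip] using h
  | _ :: _, [], t, h => by simp [strip] at h
  | a :: p, b :: q, t, h => by
    simp only [strip] at h
    cases hb : Nat.beq a b with
    | false => simp [hb] at h
    | true =>
      rw [hb] at h
      rw [Nat.eq_of_beq_eq_true hb, strip_eq h, List.cons_append]

/-- Try the rules at the top of the stack. -/
def tryR : List Rule → List ℕ → Option (List ℕ × List ℕ)
  | [], _ => none
  | R :: rs, st =>
    match strip R.lr st with
    | some t => some (t, R.r)
    | none => tryR rs st

lemma tryR_spec : ∀ {rs : List Rule} {st t r : List ℕ}, tryR rs st = some (t, r) →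
    ∃ R ∈ rs, st = R.lr ++ t ∧ r = R.r
  | [], st, t, r, h => by simp [tryR] at h
  | R :: rs, st, t, r, h => by
    simp only [tryR] at h
    cases hs : strip R.lr st with
    | some t' =>
      simp only [hs, Option.some.injEq, Prod.mk.injEq] at h
      exact ⟨R, by simp, by rw [strip_eq hs, h.1], h.2.symm⟩
    | none =>
      simp only [hs] at h
      obtain ⟨R2, hR2, hh2⟩ := tryR_spec h
      exact ⟨R2, by simp [hR2], hh2⟩

/-- Stack based rewriting with fuel. -/
def go (rs : List Rule) : ℕ → List ℕ → List ℕ → List ℕ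
  | 0, st, inp => st.reverse ++ inp
  | _ + 1, st, [] => st.reverse
  | n + 1, st, c :: inp =>
    match tryR rs (c :: st) with
    | none => go rs n (c :: st) inp
    | some (t, r) => go rs n t (r ++ inp)

/-- Normal form of a word. -/
def nf (rs : List Rule) (w : List ℕ) : List ℕ := go rs 5000 [] w

section sound
variable {G : Type*} [Group G] (s : ℕ → G) (A : ℕ → Prop)

/-- Soundness of a rule for letters in `A`. -/
def Ok (R : Rule) : Prop :=
  (∀ x ∈ R.lr, A x) → ev s R.lr.reverse = ev s R.r ∧ ∀ x ∈ R.r, A x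

lemma go_sound {rs : List Rule} (h : ∀ R ∈ rs, Ok s A R) :
    ∀ (n : ℕ) (st inp : List ℕ), (∀ x ∈ st, A x) → (∀ x ∈ inp, A x) →
      ev s (go rs n st inp) = ev s st.reverse * ev s inp := by
  intro n
  induction n with
  | zero => intro st inp _ _; simp [go]
  | succ n ih =>
    intro st inp hst hinp
    cases inp with
    | nil => simp [go]
    | cons c inp =>
      have hc : ∀ x ∈ c :: st, A x := by
        intro x hx
        rcases List.mem_cons.1 hx with rfl | hx
        · exact hinp _ (by simp)
        · exact hst x hx
      have hi : ∀ x ∈ inp, A x := fun x hx => hinp x (by simp [hx])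
      simp only [go]
      cases ht : tryR rs (c :: st) with
      | none =>
        simp only
        rw [ih _ _ hc hi]
        simp [mul_assoc]
      | some q =>
        obtain ⟨t, r⟩ := q
        simp only
        obtain ⟨R, hR, he, rfl⟩ := tryR_spec ht
        have h1 : ∀ x ∈ R.lr, A x := fun x hx => hc x (by rw [he]; simp [hx])
        have h2 : ∀ x ∈ t, A x := fun x hx => hc x (by rw [he]; simp [hx])
        obtain ⟨e1, e2⟩ := h R hR h1
        rw [ih _ _ h2 (by
          intro x hx
          rcases List.mem_append.1 hx with hx | hx
          · exact e2 x hx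
          · exact hi x hx)]
        have e3 : ev s (c :: st).reverse = ev s t.reverse * ev s R.r := by
          rw [he, List.reverse_append, ev_append, e1]
        have e4 : ev s st.reverse * s c = ev s (c :: st).reverse := by simp
        rw [ev_append, ← mul_assoc, ← e3, ← e4, ev_cons, mul_assoc]

lemma nf_sound {rs : List Rule} (h : ∀ R ∈ rs, Ok s A R) (w : List ℕ) (hw : ∀ x ∈ w, A x) :
    ev s (nf rs w) = ev s w := by
  rw [nf, go_sound s A h _ _ _ (by simp) hw]; simp

end sound

/-- Is the rule one of the defining relations? -/
def isBase (R : Rule) : Bool :=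
  match R.lr.reverse with
  | i :: j :: t =>
    cond (Nat.beq i j) (leq (i :: j :: t) [i, i] && leq R.r [])
      (leq (i :: j :: t) (alt i j (mm i j)) && leq R.r (alt j i (mm i j)))
  | _ => false

/-- Check a list of rules, each one following from the earlier ones. -/
def chk : List Rule → List Rule → Bool
  | _, [] => true
  | dn, R :: t =>
    (R.r.all (fun x => lmem x R.lr) && R.v.all (fun x => lmem x R.lr)) &&
    ((isBase R || leq (nf dn (R.lr.reverse ++ R.v)) (nf dn (R.r ++ R.v))) && chk (R :: dn) t)

section coxeter
variable {G : Type*} [Group G]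

lemma br2 {x y : G} (hx : x * x = 1) (hy : y * y = 1) (h : (x * y) ^ 2 = 1) :
    x * y = y * x := by
  have hx' : x⁻¹ = x := inv_eq_of_mul_eq_one_left hx
  have hy' : y⁻¹ = y := inv_eq_of_mul_eq_one_left hy
  have h1 : (x * y) * (x * y) = 1 := by rw [← h, pow_two]
  have := eq_inv_of_mul_eq_one_left h1
  rwa [mul_inv_rev, hx', hy'] at this

lemma br3 {x y : G} (hx : x * x = 1) (hy : y * y = 1) (h : (x * y) ^ 3 = 1) :
    x * (y * x) = y * (x * y) := by
  have hx' : x⁻¹ = x := inv_eq_of_mul_eq_one_left hx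
  have hy' : y⁻¹ = y := inv_eq_of_mul_eq_one_left hy
  have h1 : (x * (y * x)) * (y * (x * y)) = 1 := by rw [← h]; simp [pow_succ, mul_assoc]
  have := eq_inv_of_mul_eq_one_left h1
  simpa [mul_inv_rev, hx', hy', mul_assoc] using this

lemma br4 {x y : G} (hx : x * x = 1) (hy : y * y = 1) (h : (x * y) ^ 4 = 1) :
    x * (y * (x * y)) = y * (x * (y * x)) := by
  have hx' : x⁻¹ = x := inv_eq_of_mul_eq_one_left hx
  have hy' : y⁻¹ = y := inv_eq_of_mul_eq_one_left hy
  have h1 : (x * (y * (x * y))) * (x * (y * (x * y))) = 1 := by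
    rw [← h]; simp [pow_succ, mul_assoc]
  have := eq_inv_of_mul_eq_one_left h1
  simpa [mul_inv_rev, hx', hy', mul_assoc] using this

variable (s : ℕ → G) (A : ℕ → Prop)

/-- The Coxeter relations for letters in `A`. -/
def Cox : Prop := ∀ i j, A i → A j → (s i * s j) ^ mm i j = 1

variable {s A}

lemma Cox.sq (h : Cox s A) {i : ℕ} (hi : A i) : s i * s i = 1 := by
  simpa [mm] using h i i hi hi

lemma Cox.inv (h : Cox s A) {i : ℕ} (hi : A i) : (s i)⁻¹ = s i :=
  inv_eq_of_mul_eq_one_left (h.sq hi)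

lemma Cox.alt (h : Cox s A) {i j : ℕ} (hi : A i) (hj : A j) (hij : i ≠ j) :
    ev s (alt i j (mm i j)) = ev s (alt j i (mm i j)) := by
  have h1 := h i j hi hj
  have hx := h.sq hi
  have hy := h.sq hj
  have hm : mm i j = 2 ∨ mm i j = 3 ∨ mm i j = 4 := by
    unfold mm; split_ifs <;> simp_all
  rcases hm with hm | hm | hm <;> rw [hm] at h1 ⊢
  · simpa [Loc.alt] using br2 hx hy h1
  · simpa [Loc.alt] using br3 hx hy h1
  · simpa [Loc.alt] using br4 hx hy h1

lemma isBase_ok (h : Cox s A) {R : Rule} (hb : isBase R = true)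
    (hl : ∀ x ∈ R.lr, A x) : ev s R.lr.reverse = ev s R.r := by
  have hl' : ∀ x ∈ R.lr.reverse, A x := by simpa using hl
  unfold isBase at hb
  revert hb hl'
  generalize R.lr.reverse = l
  intro hb hl'
  match l, hb, hl' with
  | i :: j :: t, hb, hl' =>
    simp only at hb
    cases hij : Nat.beq i j with
    | true =>
      rw [hij] at hb
      simp only [cond_true, Bool.and_eq_true] at hb
      rw [leq_eq hb.1, leq_eq hb.2]
      simpa using h.sq (hl' i (by simp))
    | false =>
      rw [hij] at hb
      simp only [cond_false, Bool.and_eq_true] at hb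
      have hne : i ≠ j := Nat.ne_of_beq_eq_false hij
      rw [leq_eq hb.1, leq_eq hb.2]
      exact h.alt (hl' i (by simp)) (hl' j (by simp)) hne

lemma chk_sound (h : Cox s A) : ∀ (t dn : List Rule), (∀ R ∈ dn, Ok s A R) →
    chk dn t = true → ∀ R ∈ t, Ok s A R := by
  intro t
  induction t with
  | nil => intro _ _ _ R hR; simp at hR
  | cons R t ih =>
    intro dn hd hc
    simp only [chk, Bool.and_eq_true, Bool.or_eq_true, List.all_eq_true] at hc
    obtain ⟨⟨c1, c2⟩, c3, c4⟩ := hc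
    have hR : Ok s A R := by
      intro hl
      have hr : ∀ x ∈ R.r, A x := fun x hx => hl x (lmem_mem (c1 x hx))
      have hv : ∀ x ∈ R.v, A x := fun x hx => hl x (lmem_mem (c2 x hx))
      refine ⟨?_, hr⟩
      rcases c3 with c3 | c3
      · exact isBase_ok h c3 hl
      · have e := congrArg (ev s) (leq_eq c3)
        rw [nf_sound s A hd _ (by
            intro x hx
            rcases List.mem_append.1 hx with hx | hx
            · exact hl x (by simpa using hx)
            · exact hv x hx),
          nf_sound s A hd _ (by
            intro x hx
            rcases List.mem_append.1 hx with hx | hx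
            · exact hr x hx
            · exact hv x hx), ev_append, ev_append] at e
        exact mul_right_cancel e
    intro R' hR'
    rcases List.mem_cons.1 hR' with rfl | hR'
    · exact hR
    · exact ih (R :: dn) (by
        intro R'' h''
        rcases List.mem_cons.1 h'' with rfl | h''
        · exact hR
        · exact hd _ h'') c4 R' hR'

end coxeter
/-! ## Data -/

/-- Certified rewriting rules. -/
def rules : List Rule := [
  ⟨[0, 0], [], []⟩,
  ⟨[1, 1], [], []⟩,
  ⟨[0, 2], [0, 2], []⟩,
  ⟨[2, 2], [], []⟩,
  ⟨[0, 3], [0, 3], []⟩,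
  ⟨[1, 3], [1, 3], []⟩,
  ⟨[3, 3], [], []⟩,
  ⟨[0, 4], [0, 4], []⟩,
  ⟨[1, 4], [1, 4], []⟩,
  ⟨[2, 4], [2, 4], []⟩,
  ⟨[4, 4], [], []⟩,
  ⟨[2, 5], [2, 5], []⟩,
  ⟨[3, 5], [3, 5], []⟩,
  ⟨[5, 5], [], []⟩,
  ⟨[1, 0, 1], [0, 1, 0], []⟩,
  ⟨[2, 1, 2], [1, 2, 1], []⟩,
  ⟨[4, 3, 4], [3, 4, 3], []⟩,
  ⟨[5, 4, 5], [4, 5, 4], []⟩,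
  ⟨[2, 0, 1, 2], [1, 2, 1, 0], [0]⟩,
  ⟨[2, 3, 2, 3], [2, 3, 2, 3], []⟩,
  ⟨[4, 2, 3, 4], [3, 4, 3, 2], [2]⟩,
  ⟨[5, 3, 4, 5], [4, 5, 4, 3], [3]⟩,
  ⟨[4, 1, 2, 3, 4], [3, 4, 3, 2, 1], [1]⟩,
  ⟨[5, 2, 3, 4, 5], [4, 5, 4, 3, 2], [2]⟩,
  ⟨[1, 2, 3, 1, 2, 3], [2, 3, 2, 1, 3, 2], [2]⟩,
  ⟨[3, 4, 3, 2, 3, 4], [3, 4, 3, 2, 3, 4], [4]⟩,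
  ⟨[5, 3, 2, 3, 4, 5], [4, 5, 4, 3, 2, 3], [3]⟩,
  ⟨[3, 4, 3, 1, 2, 3, 4], [3, 4, 3, 2, 1, 3, 4], [1]⟩,
  ⟨[0, 1, 2, 3, 0, 1, 2, 3], [2, 3, 2, 1, 0, 3, 2, 1], [1]⟩,
  ⟨[4, 5, 4, 3, 2, 3, 4, 5], [4, 5, 4, 3, 2, 3, 4, 5], [5]⟩,
  ⟨[3, 2, 3, 4, 2, 3, 1, 2, 3, 4], [3, 4, 3, 2, 1, 3, 2, 4, 3, 2], [2]⟩,
  ⟨[3, 2, 3, 4, 2, 3, 0, 1, 2, 3, 4], [3, 4, 3, 2, 1, 0, 3, 2, 4, 3, 2], [0]⟩,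
  ⟨[3, 1, 2, 3, 4, 2, 3, 1, 2, 3, 4], [3, 4, 3, 2, 1, 3, 2, 4, 3, 2, 1], [1]⟩,
  ⟨[3, 1, 2, 3, 4, 2, 3, 0, 1, 2, 3, 4], [3, 4, 3, 2, 1, 0, 3, 2, 4, 3, 2, 1], [1]⟩,
  ⟨[4, 3, 2, 3, 4, 3, 2, 3, 1, 2, 3, 4], [3, 4, 3, 2, 1, 3, 2, 3, 4, 3, 2, 3], [3]⟩,
  ⟨[4, 3, 1, 2, 3, 4, 3, 2, 3, 1, 2, 3, 4], [3, 4, 3, 2, 1, 3, 2, 3, 4, 3, 2, 1, 3], [1]⟩,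
  ⟨[4, 2, 3, 1, 2, 3, 4, 3, 2, 3, 1, 2, 3, 4], [3, 4, 3, 2, 1, 3, 2, 3, 4, 3, 2, 1, 3, 2], [2]⟩,
  ⟨[3, 2, 3, 1, 2, 3, 4, 1, 2, 3, 0, 1, 2, 3, 4], [3, 4, 3, 2, 1, 0, 3, 2, 1, 4, 3, 2, 1, 3, 2], [2]⟩,
  ⟨[3, 4, 3, 2, 3, 1, 2, 3, 4, 3, 2, 3, 1, 2, 3, 4], [3, 4, 3, 2, 1, 3, 2, 3, 4, 3, 2, 1, 3, 2, 3, 4], [4]⟩]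

/-- A table of coset representatives. -/
structure Tab where
  ls : List ℕ
  k : ℕ
  R : List (List ℕ)

/-- Coset representatives for all the relevant pairs (interval, letter). -/
def tabs : List Tab := [
  ⟨[0], 0, [[], [0]]⟩,
  ⟨[0, 1], 0, [[], [0], [1, 0]]⟩,
  ⟨[0, 1], 1, [[], [1], [0, 1]]⟩,
  ⟨[0, 1, 2], 0, [[], [0], [1, 0], [2, 1, 0]]⟩,
  ⟨[0, 1, 2], 1, [[], [1], [0, 1], [2, 1], [0, 2, 1], [1, 0, 2, 1]]⟩,
  ⟨[0, 1, 2], 2, [[], [2], [1, 2], [0, 1, 2]]⟩,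
  ⟨[0, 1, 2, 3], 0, [[], [0], [1, 0], [2, 1, 0], [3, 2, 1, 0], [2, 3, 2, 1, 0], [1, 2, 3, 2, 1,
    0], [0, 1, 2, 3, 2, 1, 0]]⟩,
  ⟨[0, 1, 2, 3], 1, [[], [1], [0, 1], [2, 1], [0, 2, 1], [3, 2, 1], [1, 0, 2, 1], [0, 3, 2, 1],
    [2, 3, 2, 1], [1, 0, 3, 2, 1], [0, 2, 3, 2, 1], [1, 2, 3, 2, 1], [2, 1, 0, 3, 2, 1], [1, 0,
    2, 3, 2, 1], [0, 1, 2, 3, 2, 1], [1, 2, 1, 0, 3, 2, 1], [3, 2, 1, 0, 3, 2, 1], [0, 1, 0, 2,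
    3, 2, 1], [0, 1, 2, 1, 0, 3, 2, 1], [1, 3, 2, 1, 0, 3, 2, 1], [0, 1, 3, 2, 1, 0, 3, 2, 1],
    [2, 1, 3, 2, 1, 0, 3, 2, 1], [0, 2, 1, 3, 2, 1, 0, 3, 2, 1], [1, 0, 2, 1, 3, 2, 1, 0, 3, 2,
    1]]⟩,
  ⟨[0, 1, 2, 3], 2, [[], [2], [1, 2], [3, 2], [0, 1, 2], [1, 3, 2], [2, 3, 2], [0, 1, 3, 2], [2,
    1, 3, 2], [1, 2, 3, 2], [0, 2, 1, 3, 2], [1, 2, 1, 3, 2], [3, 2, 1, 3, 2], [0, 1, 2, 3, 2],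
    [1, 0, 2, 1, 3, 2], [0, 3, 2, 1, 3, 2], [0, 1, 2, 1, 3, 2], [1, 3, 2, 1, 3, 2], [0, 1, 0, 2,
    1, 3, 2], [1, 0, 3, 2, 1, 3, 2], [0, 1, 3, 2, 1, 3, 2], [2, 1, 3, 2, 1, 3, 2], [0, 1, 0, 3,
    2, 1, 3, 2], [2, 1, 0, 3, 2, 1, 3, 2], [0, 2, 1, 3, 2, 1, 3, 2], [0, 2, 1, 0, 3, 2, 1, 3,
    2], [3, 2, 1, 0, 3, 2, 1, 3, 2], [1, 0, 2, 1, 3, 2, 1, 3, 2], [1, 0, 2, 1, 0, 3, 2, 1, 3,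
    2], [0, 3, 2, 1, 0, 3, 2, 1, 3, 2], [1, 0, 3, 2, 1, 0, 3, 2, 1, 3, 2], [2, 1, 0, 3, 2, 1, 0,
    3, 2, 1, 3, 2]]⟩,
  ⟨[0, 1, 2, 3], 3, [[], [3], [2, 3], [1, 2, 3], [3, 2, 3], [0, 1, 2, 3], [1, 3, 2, 3], [0, 1,
    3, 2, 3], [2, 1, 3, 2, 3], [0, 2, 1, 3, 2, 3], [3, 2, 1, 3, 2, 3], [1, 0, 2, 1, 3, 2, 3],
    [0, 3, 2, 1, 3, 2, 3], [1, 0, 3, 2, 1, 3, 2, 3], [2, 1, 0, 3, 2, 1, 3, 2, 3], [3, 2, 1, 0,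
    3, 2, 1, 3, 2, 3]]⟩,
  ⟨[1], 1, [[], [1]]⟩,
  ⟨[1, 2], 1, [[], [1], [2, 1]]⟩,
  ⟨[1, 2], 2, [[], [2], [1, 2]]⟩,
  ⟨[1, 2, 3], 1, [[], [1], [2, 1], [3, 2, 1], [2, 3, 2, 1], [1, 2, 3, 2, 1]]⟩,
  ⟨[1, 2, 3], 2, [[], [2], [1, 2], [3, 2], [1, 3, 2], [2, 3, 2], [2, 1, 3, 2], [1, 2, 3, 2], [1,
    2, 1, 3, 2], [3, 2, 1, 3, 2], [1, 3, 2, 1, 3, 2], [2, 1, 3, 2, 1, 3, 2]]⟩,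
  ⟨[1, 2, 3], 3, [[], [3], [2, 3], [1, 2, 3], [3, 2, 3], [1, 3, 2, 3], [2, 1, 3, 2, 3], [3, 2,
    1, 3, 2, 3]]⟩,
  ⟨[1, 2, 3, 4], 1, [[], [1], [2, 1], [3, 2, 1], [2, 3, 2, 1], [4, 3, 2, 1], [1, 2, 3, 2, 1],
    [2, 4, 3, 2, 1], [1, 2, 4, 3, 2, 1], [3, 2, 4, 3, 2, 1], [1, 3, 2, 4, 3, 2, 1], [2, 3, 2, 4,
    3, 2, 1], [2, 1, 3, 2, 4, 3, 2, 1], [1, 2, 3, 2, 4, 3, 2, 1], [1, 2, 1, 3, 2, 4, 3, 2, 1],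
    [3, 2, 1, 3, 2, 4, 3, 2, 1], [1, 3, 2, 1, 3, 2, 4, 3, 2, 1], [4, 3, 2, 1, 3, 2, 4, 3, 2, 1],
    [2, 1, 3, 2, 1, 3, 2, 4, 3, 2, 1], [1, 4, 3, 2, 1, 3, 2, 4, 3, 2, 1], [2, 1, 4, 3, 2, 1, 3,
    2, 4, 3, 2, 1], [3, 2, 1, 4, 3, 2, 1, 3, 2, 4, 3, 2, 1], [2, 3, 2, 1, 4, 3, 2, 1, 3, 2, 4,
    3, 2, 1], [1, 2, 3, 2, 1, 4, 3, 2, 1, 3, 2, 4, 3, 2, 1]]⟩,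
  ⟨[2], 2, [[], [2]]⟩,
  ⟨[2, 3], 2, [[], [2], [3, 2], [2, 3, 2]]⟩,
  ⟨[2, 3], 3, [[], [3], [2, 3], [3, 2, 3]]⟩,
  ⟨[2, 3, 4], 2, [[], [2], [3, 2], [2, 3, 2], [4, 3, 2], [2, 4, 3, 2], [3, 2, 4, 3, 2], [2, 3,
    2, 4, 3, 2]]⟩,
  ⟨[2, 3, 4], 3, [[], [3], [2, 3], [4, 3], [3, 2, 3], [2, 4, 3], [4, 3, 2, 3], [3, 2, 4, 3], [3,
    4, 3, 2, 3], [2, 3, 2, 4, 3], [2, 3, 4, 3, 2, 3], [3, 2, 3, 4, 3, 2, 3]]⟩,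
  ⟨[2, 3, 4], 4, [[], [4], [3, 4], [2, 3, 4], [3, 2, 3, 4], [4, 3, 2, 3, 4]]⟩,
  ⟨[2, 3, 4, 5], 2, [[], [2], [3, 2], [2, 3, 2], [4, 3, 2], [2, 4, 3, 2], [5, 4, 3, 2], [3, 2,
    4, 3, 2], [2, 5, 4, 3, 2], [2, 3, 2, 4, 3, 2], [3, 2, 5, 4, 3, 2], [2, 3, 2, 5, 4, 3, 2],
    [4, 3, 2, 5, 4, 3, 2], [2, 4, 3, 2, 5, 4, 3, 2], [3, 2, 4, 3, 2, 5, 4, 3, 2], [2, 3, 2, 4,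
    3, 2, 5, 4, 3, 2]]⟩,
  ⟨[2, 3, 4, 5], 3, [[], [3], [2, 3], [4, 3], [3, 2, 3], [2, 4, 3], [5, 4, 3], [4, 3, 2, 3], [3,
    2, 4, 3], [2, 5, 4, 3], [3, 4, 3, 2, 3], [5, 4, 3, 2, 3], [2, 3, 2, 4, 3], [3, 2, 5, 4, 3],
    [2, 3, 4, 3, 2, 3], [3, 5, 4, 3, 2, 3], [2, 3, 2, 5, 4, 3], [4, 3, 2, 5, 4, 3], [3, 2, 3, 4,
    3, 2, 3], [2, 3, 5, 4, 3, 2, 3], [4, 3, 5, 4, 3, 2, 3], [2, 4, 3, 2, 5, 4, 3], [3, 2, 3, 5,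
    4, 3, 2, 3], [2, 4, 3, 5, 4, 3, 2, 3], [3, 2, 4, 3, 2, 5, 4, 3], [4, 3, 2, 3, 5, 4, 3, 2,
    3], [3, 2, 4, 3, 5, 4, 3, 2, 3], [2, 3, 2, 4, 3, 2, 5, 4, 3], [3, 4, 3, 2, 3, 5, 4, 3, 2,
    3], [2, 3, 2, 4, 3, 5, 4, 3, 2, 3], [2, 3, 4, 3, 2, 3, 5, 4, 3, 2, 3], [3, 2, 3, 4, 3, 2, 3,
    5, 4, 3, 2, 3]]⟩,
  ⟨[2, 3, 4, 5], 4, [[], [4], [3, 4], [5, 4], [2, 3, 4], [3, 5, 4], [3, 2, 3, 4], [2, 3, 5, 4],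
    [4, 3, 5, 4], [4, 3, 2, 3, 4], [3, 2, 3, 5, 4], [2, 4, 3, 5, 4], [5, 4, 3, 2, 3, 4], [4, 3,
    2, 3, 5, 4], [3, 2, 4, 3, 5, 4], [4, 5, 4, 3, 2, 3, 4], [3, 4, 3, 2, 3, 5, 4], [2, 3, 2, 4,
    3, 5, 4], [3, 4, 5, 4, 3, 2, 3, 4], [2, 3, 4, 3, 2, 3, 5, 4], [2, 3, 4, 5, 4, 3, 2, 3, 4],
    [3, 2, 3, 4, 3, 2, 3, 5, 4], [3, 2, 3, 4, 5, 4, 3, 2, 3, 4], [4, 3, 2, 3, 4, 5, 4, 3, 2, 3,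
    4]]⟩,
  ⟨[2, 3, 4, 5], 5, [[], [5], [4, 5], [3, 4, 5], [2, 3, 4, 5], [3, 2, 3, 4, 5], [4, 3, 2, 3, 4,
    5], [5, 4, 3, 2, 3, 4, 5]]⟩,
  ⟨[3], 3, [[], [3]]⟩,
  ⟨[3, 4], 3, [[], [3], [4, 3]]⟩,
  ⟨[3, 4], 4, [[], [4], [3, 4]]⟩,
  ⟨[3, 4, 5], 3, [[], [3], [4, 3], [5, 4, 3]]⟩,
  ⟨[3, 4, 5], 4, [[], [4], [3, 4], [5, 4], [3, 5, 4], [4, 3, 5, 4]]⟩,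
  ⟨[3, 4, 5], 5, [[], [5], [4, 5], [3, 4, 5]]⟩,
  ⟨[4], 4, [[], [4]]⟩,
  ⟨[4, 5], 4, [[], [4], [5, 4]]⟩,
  ⟨[4, 5], 5, [[], [5], [4, 5]]⟩,
  ⟨[5], 5, [[], [5]]⟩]

/-- Permutation tables of the six generators: 854 entries of 10 bits each. -/
def tab : ℕ → ℕ
  | 0 => 5190318703948705980898826680938479356469871582139717074677256829887640588266386497471970131796884249579986015572352905391378970487696503654690705792988179915468852076326948152964021957847261869015256300741562447357712367203493350222089031140592923249577142865834766106061066058866321511583379117366414689242540159118069399096679749664725734190169774223937049870013584726493591842564157280142429627312258917553426078968117314306502872358157274641579441026396451141761947002413162377393417168208375935596593683936274526319713698286200275615650473083607140300295091010586671210099137726034311804588170427221578094481106309292118286380257609264663661378416758685737713530513461503817127488855721347900179272249219065117612619101753168647312736939399413788836485935573391997000612488034576725918080320262877253955449290087495917406806069334276239932038440411354280168032067635450548823748984569790531338423270744884931795698603032861699239339306566477622929791089276149130262825352657949820113941557455203937758187009889294932456157934037860750251325737888173643861314774621061355925305841597933301542114321020760253077382677161645766445779053911927317437853743045806793884057924577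14464693629847240620276972516874981486193266451857101103547248988650489925021548519758752121971152580731641967866547279388837841552956215959383363896726835275442749138430862694257119528476150574773784536919746347249460858962560697143905308603258969334871456436289676839062495677579506490802875333575444239529885335693784396226221903508473154953815396812362483043116238835822908920390445205954968554134689708931842222982106184256008718171201041380956578947491431720897752411924464244039789501691241302997457501914795979779806699856141818261468960446626959945574557040428935400590491487537993187492410479001849094738505559340256149334531355675845667822231959962980228136104927262139467170048382589002495936511564864080670198999993620083483962755541248343995948918172786281808902435751270879143814400207601094514691598781832540377602783082684243040237034669112943983718274570871356683322400355494620421066056918258724895309759398467428281048308189468803755592856875262225698770297053409960158584444713612208921610404743525368924763776025704134507668258736311357393176476724688512387443753536139205121553876066605941108418096767552242427665049414588105047042529019187824677184729399501492378401525617995556387181351249832078782833309037856820219091491163964389025558964834346185226767085325457992285664145963701603058699001252400928691351454694792442977694007943790208304098778585113271917814480897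
  | 1 => 5196420227307851103734376168765200509123629280311973490569541992646013543281864195805056747390940354410478607068232328199323688753179736705900793534950791761751272438570792499624371180672266728101950621852407367941792290353149146843611773695735314831866076396075355870889265715134827914559979569866890759703234144056092754027859760663476100681633704489530789955691052274801497335298949869940488852972833334565624838240305051184961329719108048437270826376016669929348128920193694200464492230979982508573957368423635526475975403350935173247563470630619937061194882246528985493894890139872291601902018019780851268846809948909846433549334248867476665172900434435587763210943503902700065317344612418707371732798865786979744972778477275931604641375261112053120347276659702849806168040797517336652219114566300102392661238990879046977376531933852894662914896955421194025465832765189413578190447388334978464306226657479547651453413521209219855626520426376568703055374455607044104629499910863004508175817342166404000438187194820874241175226304417183221469291097520443513681884803333409536537908637827680955745501903984723593049230508648386527917437008921997155248204316981737377142232698158882899734407493838301262554284271156892381396900712916524006592016259190072162264033146598377649672993140885361876072548571902859193932578569260364103807483602604409924700298788182697857558181014949700770685613375440513345958997056428733364041645776796217785927717382447906665699677267607885632580900531027153548305478032785468979647457322883961884054895149458809673001883763859706652645019754050476558573160825283779607807298981003132044466980849927432001939755069401084209759112506448869893352007146569682100874781001312171964469997081495099384290215188453772493447138603980592082780519326448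47056439631203639607131898943441418765902855462983030101194279960846246617254271215710799363592858947699300222096914692710630631769634178977441148313772926844716638922494641395148728149285919688710504790145910186160582146116115652704811801208300604292795016952200205205053315250354094641180569006077956049979283995084748297400480057134669268704655103974262182405647826800099508547308586816484434324830065945560516857490444527491716132592766090684673613378680628659361357452954335091337145919486975116237049371129306315640478331152983476405905397021685970678507248755488496762547951688699922735870195577369210266079903574811487463489569204726579161460283137965166285965695707345546958981521840954231887357476968060442581623583929473037195013592230255197111514762990483185313528933607550905035524096
  | 2 => 5190318703886137436026059704290218974621822515752553455685979620831079208134927496984942633444512717437728388977993165371109311768095527546851428438526706848218245133961354461757863400710226190482803077850272011168371359033792527024924781435152085230521595136715074452967249930055274890116913002580486036769796483561384289027478788146007995431614523223191026877067078156934879074427393283509152131502018195745186067933837650555681248313615811713173023314369088093009774254131848924739052781508744615961147496322740336104860678651713036564686281691230519608567396129923521705036107057393756537746089685043418061831362902835052063223271661723182794161644867720523840086305846928943421026496371224280874775584511157277443749966238223428338751893647907816770301180262000621058356212422530471599582157535120461404904946878933018928586806646917083723892089414911149659866617666856789697481805215337218698194989567085686069894950376707139356187777404779401050788035106298065253845287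88778531348232780764080403538715532587353598169615464218482743965885663106502868616056855610564423372214197040563893388914387307778005805600419435291626683071517865046751366109682061577021269412735392086496110580611396975713637852820384777846373101037562376300089619484693483440312466112029168613205229763557728236496213620377352978285563568057368861084164287637942148274731038699875468002733739007473902861422320297611885094732369626203964364660347863592673731389960676482507049725997713218097707792860908107645731549920831215618694877766224676301210579052192997995556333236340797800173754915071953683405189415691474847193947558231329270225738680141886889278260951265570688235880870520084634896088506055652552311694441183134382131502729668706327174794712625122905841592993189157462585369248568697731967856180228487145610183135037520572537672239428200893346655444818320300544594434638600450235501403670370882790558299485558231428259772473052822845438426814654187744890527121537490949800604712597503800685573774672295811744318177494465319726894853535985302992145052199966702948108322938669309395023549636518813592852559788116327110677739500360507925038182229427139201955597198824334670542914779278675798529303305186834284857045717648508386617136567772373791856361360706022246119703982902184235254076236951899028326439771814591516379124257404109458838932535901739818657989108723965494893315084771287154216320649832013894163963121936469011951423839137409250722856468258996923088094446807221583163342268957482382567468864061851349611947405889317359316961088018412970239890420660178963994636536775680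
  | 3 => 5172014163101758407976425557976385998575739745295879269857856930334239606892708019374053673479393562327015018752478807029051340044920797740206935002524123114404854647399956375564964600535872246202380809064484655209594147240167372175831645138484519969926282849917196773509877024177125927335101456539477659903572473842418961342754148726611728731766395976002660878170937868042332182490424546321077474347844462885221073219434052088810154377366048867220692414581237183433139493455570578884502838410228340837894765281702634617216510584912099802518895599808987076116357977370549575412047714865668256409118251570777233458739830264221345926869037255390238778666540505883629525738746621221405802116771064013140250326754072094927630789841960660694273608547096945333996575792041237281346650281910488437135802662694690211834413293074851250912093141101126532779336213320235535655266057634328971513563831547271392394396434530939592634670384352981704360332447804697239207120151284877036414712253705899415340799231000733683246251862025147540368225990027702505049557709973087325441273326527813397501704251906443582163330397930541290998911926425875800031606747862590266933196166920438669783171721070779839079582218229331951889462489985064269246414275307147038021492560819116905901414916438749138358525008461713343435180635684742917802343063173397760100493695967426449186056335127050016795638971805011435697446300913035238162252407714717913970519996884205851772736734837691353093827929476697103658525272298636692862121858002915102127757910126161311394810555788596022798980347026940949932541936105878290184500972343216164267767308517305309017626913129627623137480493508289267092815596795862498280719999770454760440429780836897565821546470829566281164006036063728773554386052495425308927839638043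19797676411414075057785445971802296395426671566725698652846363210450529384266034349597757685659636419328246491007647749872304827187844050771265437606917210116579625910976559148929710191270002327629785922349788673638632610645916443927601281797331221763768717553927089437681680629374943870131290204121704276165484558184380963461913545447898692550368268171382368426775811231168931153432009127228027916676571123265453794879764616634450677371407199790766658462459235489406788151314759826225004308497560547014528105835245759366539164661404384656881708534367288343789914339761875534726835923708906865491988869573582563114468385021121687572901510336518001712074283974330821618473464335250135561622986741394949400851029032446719622569000706960093298731440935781089580041861125176793095596629662577511629824
  | 4 => 5214772587795537266212425884783771236329366747274409227814248920559024397236299750910654510302849910612325623548138610898888367081548495463852972808308241885650651367228785311940743094597925960030459242135593203162284607313923628430584240159214632870027138693384020068131107893964771358359762496341044524075843770202844370919523831872721106609040256470731482871203607479012548995808596019855827099980450211113798513932457769176864837941514580960373705272995485884747057887620068721232272661594332058756682046150534768107393660972699111161759873166611328494947188552980426925083916455501680742135087035486528176446351781276966428230207455835304891041280756812220577503205486201944653539283903007618186577143437130176736210324736641212940562660800735060221238124989960954267567214216616688704098846506731933417495484013117936348096311637420289107584152596593842660145508948217275065901615193708453254540479186864809646644669647217639777203055580362526880597012475758111140219788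87653614366267705869432801957729555022616564061392224347714458636733732331170660593272650346688992945500319305919305682123067242667864024540042295786077067849820898405771713381987625865854778632778692829781389139048864732210235748833139427974361593154412836755959658601091334420552611475018946372005794966728600294231044753616328495839447358977203614973513933615791102396944103118733172829158929529919600223208228004072519650718217350226361487675114341133142036012659724686956291447052828245849042991367667553260063644590301297954709978019580924935517450945367102278659989858514984397387497092359611235931395669514615157809740687433962008353131661069516628594735387953200982139481265932365099981978732530912549088261657402765112312252636660435775391777808136413174423753245942332803274470188423848112139863059606362452346231894495381257954046966690888248202477221358353819002921711462894228053569812265214577529921296146906028060428965158205791464996700328293354139501185244059703727507860274001491560855146327816015897942715434342874141131314004526634941269305436759643336880507637527455717527151876210725597021963025522187700433086657856275502013879807461529473306120281211698036772244095344662005910989526605869869708304242430965156007661786429211368554576224542380282368149097723578049958944431325175609048011654090636141847587561813900131616739567929443864014809496488613842472418252128373185132439449861981256746669636451518157319270295294192706306149289562886896580621751855992069435475605988869414237464602346503408164863915914664935109756788687376848867542793312978471920616081895457792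
  | _ => 5208677017141980580165743361519963026532022447823491385616027413964302307910213828986382128810495156136341293611106377046357114562463442471417043187705912566560096771685740250304331528205656080437450231445131226052333575348977765164998314040948636025132870008639185233975531573592198888712911265920113930072074744126653623780632981066787950143909315023651719299429576660854722888725146982435597664678016926231591261415005825534868846303404913071170421729401132064887452627370648156461917801654592373423768988089362807615995383608540842462739948637300493876205419272376198028802537362244150342244197617524925859401539671728553531515307691698475363766268542913432719749444138671574063116568460983707636928057035125542723343842781364039600147971613149596285090950460132374477475979622622331753305565419015731808428602359351686855279344677632543722909192653218576921426167976534095038471058028441385652115226529972216775165421492796990792250700528132971393926154528794204225116656339790960057704299152197117858002267979366320803697216045959307193401905520546461468372245468935810477062747572552150801723855880744115354092526279391652643710134512516253834805871255548640249904743286577610947224649023942428209452574602443337986731837853330950718372077969549511407083234170509136284081413490733369564902278105672852940744797959368117967436094008667966087811025439644729598074775032251435701239006358837813495128875702249142758528742476847457379300077641994126013982415539634446387456699086546952922098382573583660313983244523090193133075807488489922270960876403470413950587493382522298133963770686497373864439610402699247166086540866752326457746816180110342722903513630430220729756927291219215891794659888185798616663729195424358525323909634161985344219106818197833120804400642034894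83275103477379753844569187906471028504586291741867641209338836947364374817329981648195515967778900689307800983716102960985795513412947790900610256068670618945056099750590871754163871023192830018434134961297527339706496724070718374746614428144212219057208719166448116567115689519139671741635874747679010938743671363250476391859919517961716146492642582459651888271880075057735432698385948790724282418831327931881625206053444715374931127894975782298554571978725050627791491108544016476603641085390480271563683905155107674269579995849095833160580613086250469168790852734071115975209673002811758543551872805731056458947327400998676224506165988053542466971457129062121589109149026367211915763610320745120120647681288233918421577773295667908567736201074212478184210136505042048487004807709707684807680

/-- The six distinguished points. -/
def om : ℕ → ℕ
  | 0 => 0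
  | 1 => 260
  | 2 => 225
  | 3 => 236
  | 4 => 377
  | _ => 258

/-- Image of a point under a generator. -/
def L (i x : ℕ) : ℕ := Nat.mod (Nat.div (tab i) (Nat.pow 1024 x)) 1024

/-- Image of a point under a word. -/
def evp : List ℕ → ℕ → ℕ
  | [], x => x
  | i :: w, x => L i (evp w x)

/-- Bounded universal quantifier. -/
def allB (f : ℕ → Bool) : ℕ → Bool
  | 0 => true
  | n + 1 => f n && allB f n

lemma allB_spec {f : ℕ → Bool} : ∀ {n : ℕ}, allB f n = true → ∀ x < n, f x = true
  | 0, _, x, hx => by omega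
  | n + 1, h, x, hx => by
    simp only [allB, Bool.and_eq_true] at h
    rcases Nat.lt_succ_iff_lt_or_eq.1 hx with hx | rfl
    · exact allB_spec h.2 x hx
    · exact h.1

/-- The number of points. -/
abbrev NN : ℕ := 854

/-- Force evaluation of a word. -/
def fl : List ℕ → (List ℕ → Bool) → Bool
  | [], f => f []
  | a :: t, f => fl t (fun t' => f (a :: t'))

lemma fl_eq : ∀ (w : List ℕ) (f : List ℕ → Bool), fl w f = f w
  | [], _ => rfl
  | a :: t, f => by rw [fl, fl_eq t]

/-- Check one entry of a coset table. -/
def entryCheck (T : Tab) (w : List ℕ) : Bool :=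
  (w.all (fun x => lmem x T.ls) &&
    (leq w [] || !Nat.beq (evp w (om T.k)) (om T.k))) &&
  T.ls.all (fun i => fl (nf rules (i :: w)) (fun n =>
    T.R.any (fun w' => leq n w') ||
    T.ls.any (fun j => !Nat.beq j T.k && leq n (nf rules (w ++ [j])))))

/-- Check a coset table. -/
def tabCheck (T : Tab) : Bool :=
  (T.R.any (fun w => leq w []) && lmem T.k T.ls) && T.R.all (entryCheck T)

/-- Does a word fix all the points? -/
def checkW (w : List ℕ) : Bool := allB (fun x => Nat.beq (evp w x) x) NN

theorem rules_ok : chk [] rules = true := by decide +kernel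

theorem tabs_ok : tabs.all tabCheck = true := by decide +kernel

theorem perm_ok : allB (fun i => allB (fun x =>
    Nat.blt (L i x) NN && Nat.beq (L i (L i x)) x) NN) 6 = true := by decide +kernel

theorem rel_ok : allB (fun i => allB (fun j => checkW (pw [i, j] (mm i j))) 6) 6 = true := by
  decide +kernel

theorem relG_ok : checkW (pw [0, 1, 2, 3, 2, 1, 4, 3, 2, 3, 4] 12) = true := by decide +kernel

theorem relV_ok : checkW (pw [5, 4, 3, 2, 3, 4, 1, 2, 3, 2, 1, 4, 3, 2, 3, 4] 3) = true := by
  decide +kernel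

theorem fix_ok : allB (fun i => allB (fun k =>
    Nat.beq i k || Nat.beq (L i (om k)) (om k)) 6) 6 = true := by decide +kernel

theorem om_ok : allB (fun k => Nat.blt (om k) 494) 6 = true := by decide +kernel
/-! ## The permutation representation -/

lemma L_lt {i x : ℕ} (hi : i < 6) (hx : x < NN) : L i x < NN := by
  have h := allB_spec (allB_spec perm_ok i hi) x hx
  simp only [Bool.and_eq_true] at h
  exact Nat.blt_eq.mp h.1

lemma L_L {i x : ℕ} (hi : i < 6) (hx : x < NN) : L i (L i x) = x := by
  have h := allB_spec (allB_spec perm_ok i hi) x hx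
  simp only [Bool.and_eq_true] at h
  exact Nat.eq_of_beq_eq_true h.2

/-- The permutations given by the tables. -/
def P (i : ℕ) : Equiv.Perm (Fin NN) :=
  if h : i < 6 then
    Function.Involutive.toPerm (fun x : Fin NN => (⟨L i x.1, L_lt h x.2⟩ : Fin NN))
      (fun x => Fin.ext (L_L h x.2))
  else 1

lemma P_val {i : ℕ} (h : i < 6) (x : Fin NN) : (P i x).1 = L i x.1 := by
  unfold P; rw [dif_pos h]; rfl

lemma evP_val {l : List ℕ} (h : ∀ i ∈ l, i < 6) (x : Fin NN) :
    (ev P l x).1 = evp l x.1 := by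
  induction l with
  | nil => simp [evp]
  | cons i l ih =>
    rw [ev_cons, Equiv.Perm.mul_apply, P_val (h i (by simp)),
      ih (fun j hj => h j (by simp [hj])), evp]

lemma evP_one {l : List ℕ} (h : ∀ i ∈ l, i < 6) (hc : checkW l = true) : ev P l = 1 := by
  ext x
  rw [evP_val h]
  exact Nat.eq_of_beq_eq_true (allB_spec hc x.1 x.2)

lemma coxP : Cox P (fun i => i < 6) := by
  intro i j hi hj
  have h := allB_spec (allB_spec rel_ok i hi) j hj
  have := evP_one (l := pw [i, j] (mm i j)) (by
    intro x hx
    have := mem_pw hx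
    simp only [List.mem_cons, List.not_mem_nil, or_false] at this
    rcases this with rfl | rfl <;> assumption) h
  rw [ev_pw] at this
  simpa using this

lemma om_lt {k : ℕ} (hk : k < 6) : om k < 494 := Nat.blt_eq.mp (allB_spec om_ok k hk)

/-- A point with given number. -/
def pt (n : ℕ) : Fin NN := Fin.ofNat NN n

lemma pt_val {n : ℕ} (h : n < NN) : (pt n).1 = n := Nat.mod_eq_of_lt h

lemma evP_pt {l : List ℕ} (h : ∀ i ∈ l, i < 6) {n : ℕ} (hn : n < NN) :
    ev P l (pt n) = pt n ↔ evp l n = n := by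
  rw [Fin.ext_iff, evP_val h, pt_val hn]

lemma P_om {i k : ℕ} (hi : i < 6) (hk : k < 6) (h : i ≠ k) : P i (pt (om k)) = pt (om k) := by
  have h1 := allB_spec (allB_spec fix_ok i hi) k hk
  have h2 : om k < NN := (om_lt hk).trans (by decide)
  rw [Fin.ext_iff, P_val hi, pt_val h2]
  rw [Bool.or_eq_true] at h1
  rcases h1 with h1 | h1
  · exact absurd (Nat.eq_of_beq_eq_true h1) h
  · exact Nat.eq_of_beq_eq_true h1

/-! ## Groups with Coxeter generators mapping to the permutations -/

/-- A group with Coxeter generators that map to the given permutations. -/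
structure Rep {G : Type*} [Group G] (s : ℕ → G) (A : ℕ → Prop)
    (φ : G →* Equiv.Perm (Fin NN)) : Prop where
  cox : Cox s A
  lt : ∀ i, A i → i < 6
  map : ∀ i, A i → φ (s i) = P i

section rep
variable {G : Type*} [Group G] {s : ℕ → G} {A : ℕ → Prop} {φ : G →* Equiv.Perm (Fin NN)}

lemma Rep.ev_map (h : Rep s A φ) {l : List ℕ} (hl : ∀ i ∈ l, A i) : φ (ev s l) = ev P l :=
  Loc.ev_map s φ P l (fun i hi => h.map i (hl i hi))

lemma nfs (h : Cox s A) {l : List ℕ} (hl : ∀ i ∈ l, A i) : ev s (nf rules l) = ev s l :=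
  nf_sound s A (chk_sound h rules [] (by simp) rules_ok) l hl

lemma nf_eq (h : Cox s A) {l l' : List ℕ} (hl : ∀ i ∈ l, A i) (hl' : ∀ i ∈ l', A i)
    (he : leq (nf rules l) (nf rules l') = true) : ev s l = ev s l' := by
  rw [← nfs h hl, leq_eq he, nfs h hl']

lemma Cox.comm (h : Cox s A) {i j : ℕ} (hi : A i) (hj : A j) (hm : mm i j = 2) :
    s i * s j = s j * s i := by
  have := h i j hi hj
  rw [hm] at this
  exact br2 (h.sq hi) (h.sq hj) this

lemma comm_ev (h : Cox s A) {i : ℕ} (hi : A i) {l : List ℕ}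
    (hl : ∀ j ∈ l, A j ∧ mm i j = 2) : s i * ev s l = ev s l * s i := by
  induction l with
  | nil => simp
  | cons j l ih =>
    rw [ev_cons, ← mul_assoc, h.comm hi (hl j (by simp)).1 (hl j (by simp)).2, mul_assoc,
      ih (fun x hx => hl x (by simp [hx])), mul_assoc]

lemma tab_spec {T : Tab} (hT : T ∈ tabs) : [] ∈ T.R ∧ T.k ∈ T.ls ∧ ∀ l ∈ T.R,
    (∀ x ∈ l, x ∈ T.ls) ∧ (evp l (om T.k) = om T.k → l = []) ∧
    ∀ i ∈ T.ls, nf rules (i :: l) ∈ T.R ∨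
      ∃ j ∈ T.ls, j ≠ T.k ∧ nf rules (i :: l) = nf rules (l ++ [j]) := by
  have h := tabs_ok
  rw [List.all_eq_true] at h
  have h := h T hT
  simp only [tabCheck, Bool.and_eq_true, List.any_eq_true, List.all_eq_true] at h
  obtain ⟨⟨⟨l0, hl0, e0⟩, hk⟩, hR⟩ := h
  refine ⟨by rw [← leq_eq e0]; exact hl0, lmem_mem hk, ?_⟩
  intro l hl
  have h := hR l hl
  simp only [entryCheck, Bool.and_eq_true, List.all_eq_true, Bool.or_eq_true, fl_eq,
    List.any_eq_true] at h
  obtain ⟨⟨h1, h2⟩, h3⟩ := h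
  refine ⟨fun x hx => lmem_mem (h1 x hx), ?_, ?_⟩
  · intro he
    rcases h2 with h2 | h2
    · exact leq_eq h2
    · simp [he] at h2
  · intro i hi
    rcases h3 i hi with ⟨l', hl', e⟩ | ⟨j, hj, e1, e2⟩
    · left; rw [leq_eq e]; exact hl'
    · right
      refine ⟨j, hj, ?_, leq_eq e2⟩
      rintro rfl
      simp at e1

/-- The coset lemma. -/
lemma coset (h : Cox s A) {T : Tab} (hT : T ∈ tabs) {I : Finset ℕ} (hI : ∀ i ∈ I, A i)
    (hs : ∀ i ∈ T.ls, i ∈ I) (hc : ∀ i ∈ I, i ∈ T.ls ∨ ∀ j ∈ T.ls, mm i j = 2)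
    {g : G} (hg : g ∈ Subgroup.closure (s '' (I : Set ℕ))) :
    ∃ l ∈ T.R, ∃ x ∈ Subgroup.closure (s '' ((I.erase T.k : Finset ℕ) : Set ℕ)),
      g = ev s l * x := by
  obtain ⟨h0, hk, hR⟩ := tab_spec hT
  have step : ∀ i ∈ I, ∀ y : G,
      (∃ l ∈ T.R, ∃ x ∈ Subgroup.closure (s '' ((I.erase T.k : Finset ℕ) : Set ℕ)),
        y = ev s l * x) →
      ∃ l ∈ T.R, ∃ x ∈ Subgroup.closure (s '' ((I.erase T.k : Finset ℕ) : Set ℕ)),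
        s i * y = ev s l * x := by
    rintro i hi y ⟨l, hl, x, hx, rfl⟩
    obtain ⟨h1, -, h3⟩ := hR l hl
    have hlA : ∀ j ∈ l, A j := fun j hj => hI j (hs j (h1 j hj))
    rcases hc i hi with hiT | hcm
    · have hiA : ∀ j ∈ i :: l, A j := by
        intro j hj
        rcases List.mem_cons.1 hj with rfl | hj
        · exact hI _ hi
        · exact hlA j hj
      rcases h3 i hiT with h3 | ⟨j, hj, hjk, he⟩
      · refine ⟨_, h3, x, hx, ?_⟩
        rw [nfs h hiA, ev_cons, mul_assoc]
      · refine ⟨l, hl, s j * x, mul_mem (Subgroup.subset_closure ⟨j, ?_, rfl⟩) hx, ?_⟩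
        · simp [hjk, hs j hj]
        · have e := congrArg (ev s) he
          rw [nfs h hiA, nfs h (by
            intro z hz
            rcases List.mem_append.1 hz with hz | hz
            · exact hlA z hz
            · rw [List.mem_singleton] at hz; subst hz; exact hI _ (hs _ hj))] at e
          simp only [ev_cons, ev_append, ev_nil, mul_one] at e
          rw [← mul_assoc, e, mul_assoc]
    · refine ⟨l, hl, s i * x, mul_mem (Subgroup.subset_closure ⟨i, ?_, rfl⟩) hx, ?_⟩
      · have : i ≠ T.k := by
          rintro e
          have := hcm T.k hk
          rw [e] at this
          simp [mm] at this
        simp [this, hi]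
      · rw [← mul_assoc, comm_ev h (hI i hi) (fun j hj => ⟨hlA j hj, hcm j (h1 j hj)⟩),
          mul_assoc]
  induction hg using Subgroup.closure_induction_left with
  | one => exact ⟨[], h0, 1, one_mem _, by simp⟩
  | mul_left x hx y hy ih =>
    obtain ⟨i, hi, rfl⟩ := hx
    exact step i hi y ih
  | inv_mul_cancel x hx y hy ih =>
    obtain ⟨i, hi, rfl⟩ := hx
    rw [h.inv (hI i hi)]
    exact step i hi y ih

lemma fix_closure (h : Rep s A φ) {I : Finset ℕ} (hI : ∀ i ∈ I, A i) {k : ℕ} (hk : k < 6)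
    (hkI : k ∉ I) {g : G} (hg : g ∈ Subgroup.closure (s '' (I : Set ℕ))) :
    φ g (pt (om k)) = pt (om k) := by
  induction hg using Subgroup.closure_induction with
  | mem x hx =>
    obtain ⟨i, hi, rfl⟩ := hx
    rw [h.map i (hI i hi)]
    exact P_om (h.lt i (hI i hi)) hk (by rintro rfl; exact hkI hi)
  | one => simp
  | mul x y _ _ hx hy => rw [map_mul, Equiv.Perm.mul_apply, hy, hx]
  | inv x _ hx => rw [map_inv, Equiv.Perm.inv_eq_iff_eq, hx]

lemma coset_fix (h : Rep s A φ) {T : Tab} (hT : T ∈ tabs) {I : Finset ℕ} (hI : ∀ i ∈ I, A i)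
    (hs : ∀ i ∈ T.ls, i ∈ I) (hc : ∀ i ∈ I, i ∈ T.ls ∨ ∀ j ∈ T.ls, mm i j = 2)
    {g : G} (hg : g ∈ Subgroup.closure (s '' (I : Set ℕ)))
    (hf : φ g (pt (om T.k)) = pt (om T.k)) :
    g ∈ Subgroup.closure (s '' ((I.erase T.k : Finset ℕ) : Set ℕ)) := by
  obtain ⟨l, hl, x, hx, rfl⟩ := coset h.cox hT hI hs hc hg
  obtain ⟨-, hk, hR⟩ := tab_spec hT
  obtain ⟨h1, h2, -⟩ := hR l hl
  have hk6 : T.k < 6 := h.lt _ (hI _ (hs _ hk))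
  have hlA : ∀ j ∈ l, A j := fun j hj => hI j (hs j (h1 j hj))
  rw [map_mul, Equiv.Perm.mul_apply, fix_closure h
    (fun i hi => hI i (Finset.mem_of_mem_erase hi)) hk6 (by simp) hx, h.ev_map hlA,
    evP_pt (fun i hi => h.lt i (hlA i hi)) ((om_lt hk6).trans (by decide))] at hf
  rw [h2 hf]
  simpa using hx

/-- Does the table apply to the subset and the letter? -/
def appl (T : Tab) (I : Finset ℕ) (k : ℕ) : Prop :=
  T.k = k ∧ (∀ i ∈ T.ls, i ∈ I) ∧ ∀ i ∈ I, i ∈ T.ls ∨ ∀ j ∈ T.ls, mm i j = 2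

instance (T : Tab) (I : Finset ℕ) (k : ℕ) : Decidable (appl T I k) := by
  unfold appl; infer_instance

theorem small_ok : ∀ I ∈ (Finset.range 6).powerset, (∃ j ∈ [1, 2, 3, 4], j ∉ I) →
    ∀ k ∈ I, ∃ T ∈ tabs, appl T I k := by decide +kernel

theorem f4_ok : ∃ T ∈ tabs, appl T {1, 2, 3, 4} 1 := by decide +kernel

lemma descend (h : Rep s A φ) {I : Finset ℕ} (hI : ∀ i ∈ I, A i)
    (hj : ∃ j ∈ [1, 2, 3, 4], j ∉ I) {g : G} (hg : g ∈ Subgroup.closure (s '' (I : Set ℕ)))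
    (C : Finset ℕ) (hC : ∀ k ∈ C, k ∈ I → φ g (pt (om k)) = pt (om k)) :
    g ∈ Subgroup.closure (s '' ((I \ C : Finset ℕ) : Set ℕ)) := by
  induction C using Finset.induction_on with
  | empty => simpa using hg
  | insert k C hk ih =>
    have ih := ih (fun k hk => hC k (by simp [hk]))
    rw [Finset.sdiff_insert]
    by_cases hkI : k ∈ I \ C
    · have hkI' : k ∈ I := (Finset.mem_sdiff.1 hkI).1
      obtain ⟨j, hj1, hj2⟩ := hj
      obtain ⟨T, hT, rfl, a2, a3⟩ := small_ok (I \ C)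
        (by
          rw [Finset.mem_powerset]
          intro i hi
          exact Finset.mem_range.2 (h.lt i (hI i (Finset.mem_sdiff.1 hi).1)))
        ⟨j, hj1, fun hh => hj2 (Finset.mem_sdiff.1 hh).1⟩ k hkI
      exact coset_fix h hT (fun i hi => hI i (Finset.mem_sdiff.1 hi).1) a2 a3 ih
        (hC _ (by simp) hkI')
    · rw [Finset.erase_eq_of_notMem hkI]
      exact ih

lemma f4_trivial (h : Rep s A φ) (hA : ∀ i ∈ ({1, 2, 3, 4} : Finset ℕ), A i) {g : G}
    (hg : g ∈ Subgroup.closure (s '' (({1, 2, 3, 4} : Finset ℕ) : Set ℕ)))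
    (hf : ∀ k ∈ ({1, 2, 3, 4} : Finset ℕ), φ g (pt (om k)) = pt (om k)) : g = 1 := by
  obtain ⟨T, hT, a1, a2, a3⟩ := f4_ok
  have h1 := coset_fix h hT hA a2 a3 hg (by rw [a1]; exact hf 1 (by simp))
  rw [a1] at h1
  have h2 := descend h (I := ({1, 2, 3, 4} : Finset ℕ).erase 1)
    (fun i hi => hA i (Finset.mem_of_mem_erase hi)) ⟨1, by simp, by simp⟩ h1 {1, 2, 3, 4}
    (fun k hk _ => hf k hk)
  have e : (({1, 2, 3, 4} : Finset ℕ).erase 1 \ {1, 2, 3, 4}) = ∅ := by decide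
  rw [e] at h2
  simpa using h2

end rep
/-! ## Translations -/

/-- The word of the first translation. -/
def w1 : List ℕ := [0, 1, 2, 3, 2, 1, 4, 3, 2, 3, 4, 1, 2, 3, 2, 1]
/-- The word of the second translation. -/
def w2 : List ℕ := 1 :: (w1 ++ [1])
/-- The word of the third translation. -/
def w3 : List ℕ := 2 :: (w2 ++ [2])
/-- The word of the fourth translation. -/
def w4 : List ℕ := 3 :: (w3 ++ [3])

/-- The letters of the affine group. -/
abbrev A5 : ℕ → Prop := fun i => i < 5

/-- Compare two words with letters less than five. -/
def cmp (l l' : List ℕ) : Bool :=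
  (l.all (fun i => Nat.blt i 5) && l'.all (fun i => Nat.blt i 5)) &&
    leq (nf rules l) (nf rules l')

section affine
variable {G : Type*} [Group G] {s : ℕ → G}

lemma cmp_eq (h : Cox s A5) {l l' : List ℕ} (hc : cmp l l' = true) : ev s l = ev s l' := by
  simp only [cmp, Bool.and_eq_true, List.all_eq_true] at hc
  exact nf_eq h (fun i hi => Nat.blt_eq.mp (hc.1.1 i hi)) (fun i hi => Nat.blt_eq.mp (hc.1.2 i hi))
    hc.2

lemma ev_rev (h : Cox s A5) {l : List ℕ} (hl : ∀ i ∈ l, i < 5) :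
    ev s l.reverse = (ev s l)⁻¹ :=
  ev_reverse s l (fun i hi => h.sq (hl i hi))

lemma semi {i : ℕ} {l l' : List ℕ} (h : Cox s A5) (hc : cmp (i :: l) (l' ++ [i]) = true) :
    SemiconjBy (s i) (ev s l) (ev s l') := by
  have := cmp_eq h hc
  simp only [ev_cons, ev_append, ev_nil, mul_one] at this
  exact this

lemma comm_of_semi {a x y x' y' : G} (h1 : SemiconjBy a x x') (h2 : SemiconjBy a y y')
    (hc : Commute x y) : Commute x' y' := by
  have e1 : x' = a * x * a⁻¹ := by rw [h1.eq]; group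
  have e2 : y' = a * y * a⁻¹ := by rw [h2.eq]; group
  rw [e1, e2]
  exact (Commute.conj_iff a).2 hc

lemma s11 (h : Cox s A5) : SemiconjBy (s 1) (ev s w1) (ev s w2) := semi h (by decide +kernel)
lemma s12 (h : Cox s A5) : SemiconjBy (s 1) (ev s w2) (ev s w1) := semi h (by decide +kernel)
lemma s13 (h : Cox s A5) : SemiconjBy (s 1) (ev s w3) (ev s w3) := semi h (by decide +kernel)
lemma s14 (h : Cox s A5) : SemiconjBy (s 1) (ev s w4) (ev s w4) := semi h (by decide +kernel)
lemma s21 (h : Cox s A5) : SemiconjBy (s 2) (ev s w1) (ev s w1) := semi h (by decide +kernel)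
lemma s22 (h : Cox s A5) : SemiconjBy (s 2) (ev s w2) (ev s w3) := semi h (by decide +kernel)
lemma s23 (h : Cox s A5) : SemiconjBy (s 2) (ev s w3) (ev s w2) := semi h (by decide +kernel)
lemma s24 (h : Cox s A5) : SemiconjBy (s 2) (ev s w4) ((ev s w2)⁻¹ * ev s w3 * ev s w4) := by
  have := semi (i := 2) (l := w4) (l' := w2.reverse ++ w3 ++ w4) h (by decide +kernel)
  rwa [ev_append, ev_append, ev_rev h (by decide)] at this
lemma s31 (h : Cox s A5) : SemiconjBy (s 3) (ev s w1) (ev s w1) := semi h (by decide +kernel)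
lemma s32 (h : Cox s A5) : SemiconjBy (s 3) (ev s w2) (ev s w2) := semi h (by decide +kernel)
lemma s33 (h : Cox s A5) : SemiconjBy (s 3) (ev s w3) (ev s w4) := semi h (by decide +kernel)
lemma s34 (h : Cox s A5) : SemiconjBy (s 3) (ev s w4) (ev s w3) := semi h (by decide +kernel)
lemma s41 (h : Cox s A5) : SemiconjBy (s 4) (ev s w1) (ev s w1) := semi h (by decide +kernel)
lemma s42 (h : Cox s A5) : SemiconjBy (s 4) (ev s w2) (ev s w2) := semi h (by decide +kernel)
lemma s43 (h : Cox s A5) : SemiconjBy (s 4) (ev s w3) (ev s w3) := semi h (by decide +kernel)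
lemma s44 (h : Cox s A5) : SemiconjBy (s 4) (ev s w4)
    (ev s w1 * ev s w2 * (ev s w3)⁻¹ * (ev s w4)⁻¹) := by
  have := semi (i := 4) (l := w4) (l' := w1 ++ w2 ++ w3.reverse ++ w4.reverse) h
    (by decide +kernel)
  rwa [ev_append, ev_append, ev_append, ev_rev h (by decide), ev_rev h (by decide)] at this

lemma c12 (h : Cox s A5) : Commute (ev s w1) (ev s w2) := by
  have := cmp_eq (l := w1 ++ w2) (l' := w2 ++ w1) h (by decide +kernel)
  rw [ev_append, ev_append] at this
  exact this
lemma c13 (h : Cox s A5) : Commute (ev s w1) (ev s w3) := comm_of_semi (s21 h) (s22 h) (c12 h)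
lemma c14 (h : Cox s A5) : Commute (ev s w1) (ev s w4) := comm_of_semi (s31 h) (s33 h) (c13 h)
lemma c23 (h : Cox s A5) : Commute (ev s w2) (ev s w3) := comm_of_semi (s11 h) (s13 h) (c13 h)
lemma c24 (h : Cox s A5) : Commute (ev s w2) (ev s w4) := comm_of_semi (s11 h) (s14 h) (c14 h)
lemma c34 (h : Cox s A5) : Commute (ev s w3) (ev s w4) := by
  have h1 := comm_of_semi (s22 h) (s24 h) (c24 h)
  have h2 : Commute (ev s w3) (ev s w3 * (ev s w2)⁻¹) :=
    (Commute.refl _).mul_right (c23 h).symm.inv_right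
  rw [← (c23 h).inv_left.eq] at h2
  have h3 := h2.inv_right.mul_right h1
  rwa [inv_mul_cancel_left] at h3

/-- Translations. -/
def TT (s : ℕ → G) (a b c d : ℤ) : G :=
  ev s w1 ^ a * ev s w2 ^ b * ev s w3 ^ c * ev s w4 ^ d

lemma TT_mul (h : Cox s A5) (a b c d a' b' c' d' : ℤ) :
    TT s a b c d * TT s a' b' c' d' = TT s (a + a') (b + b') (c + c') (d + d') := by
  have e12 := c12 h
  have e13 := c13 h
  have e14 := c14 h
  have e23 := c23 h
  have e24 := c24 h
  have e34 := c34 h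
  unfold TT
  rw [zpow_add, zpow_add, zpow_add, zpow_add]
  have k1 : Commute (ev s w4 ^ d) (ev s w1 ^ a' * ev s w2 ^ b' * ev s w3 ^ c') :=
    (((e14.symm.zpow_zpow _ _).mul_right (e24.symm.zpow_zpow _ _)).mul_right
      (e34.symm.zpow_zpow _ _))
  have k2 : Commute (ev s w3 ^ c) (ev s w1 ^ a' * ev s w2 ^ b') :=
    ((e13.symm.zpow_zpow _ _).mul_right (e23.symm.zpow_zpow _ _))
  have k3 : Commute (ev s w2 ^ b) (ev s w1 ^ a') := e12.symm.zpow_zpow _ _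
  rw [k1.mul_mul_mul_comm, k2.mul_mul_mul_comm, k3.mul_mul_mul_comm]

@[simp] lemma TT_zero : TT s 0 0 0 0 = 1 := by simp [TT]

lemma TT_inv (h : Cox s A5) (a b c d : ℤ) : (TT s a b c d)⁻¹ = TT s (-a) (-b) (-c) (-d) := by
  rw [inv_eq_iff_mul_eq_one, TT_mul h]; simp

lemma TT_zpow (h : Cox s A5) (a b c d n : ℤ) :
    TT s a b c d ^ n = TT s (a * n) (b * n) (c * n) (d * n) := by
  induction n using Int.induction_on with
  | zero => simp
  | succ n ih => rw [zpow_add, ih, zpow_one, TT_mul h]; congr 1 <;> ring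
  | pred n ih => rw [zpow_sub, ih, zpow_one, TT_inv h, TT_mul h]; congr 1 <;> ring

lemma e1 : ev s w1 = TT s 1 0 0 0 := by simp [TT]
lemma e2 : ev s w2 = TT s 0 1 0 0 := by simp [TT]
lemma e3 : ev s w3 = TT s 0 0 1 0 := by simp [TT]
lemma e4 : ev s w4 = TT s 0 0 0 1 := by simp [TT]

lemma TT_semi (h : Cox s A5) {x y1 y2 y3 y4 : G} (h1 : SemiconjBy x (ev s w1) y1)
    (h2 : SemiconjBy x (ev s w2) y2) (h3 : SemiconjBy x (ev s w3) y3)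
    (h4 : SemiconjBy x (ev s w4) y4) (a b c d : ℤ) :
    SemiconjBy x (TT s a b c d) (y1 ^ a * y2 ^ b * y3 ^ c * y4 ^ d) :=
  (((h1.zpow_right a).mul_right (h2.zpow_right b)).mul_right (h3.zpow_right c)).mul_right
    (h4.zpow_right d)

lemma T1 (h : Cox s A5) (a b c d : ℤ) : SemiconjBy (s 1) (TT s a b c d) (TT s b a c d) := by
  have := TT_semi h (s11 h) (s12 h) (s13 h) (s14 h) a b c d
  rw [e1, e2, e3, e4] at this
  simp only [TT_zpow h, TT_mul h, TT_inv h] at this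
  convert this using 2 <;> ring

lemma T2 (h : Cox s A5) (a b c d : ℤ) :
    SemiconjBy (s 2) (TT s a b c d) (TT s a (c - d) (b + d) d) := by
  have := TT_semi h (s21 h) (s22 h) (s23 h) (s24 h) a b c d
  rw [e1, e2, e3, e4] at this
  simp only [TT_zpow h, TT_mul h, TT_inv h] at this
  convert this using 2 <;> ring

lemma T3 (h : Cox s A5) (a b c d : ℤ) : SemiconjBy (s 3) (TT s a b c d) (TT s a b d c) := by
  have := TT_semi h (s31 h) (s32 h) (s33 h) (s34 h) a b c d
  rw [e1, e2, e3, e4] at this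
  simp only [TT_zpow h, TT_mul h, TT_inv h] at this
  convert this using 2 <;> ring

lemma T4 (h : Cox s A5) (a b c d : ℤ) :
    SemiconjBy (s 4) (TT s a b c d) (TT s (a + d) (b + d) (c - d) (-d)) := by
  have := TT_semi h (s41 h) (s42 h) (s43 h) (s44 h) a b c d
  rw [e1, e2, e3, e4] at this
  simp only [TT_zpow h, TT_mul h, TT_inv h] at this
  convert this using 2 <;> ring

lemma T_letter (h : Cox s A5) {i : ℕ} (hi : i ∈ ({1, 2, 3, 4} : Finset ℕ)) (a b c d : ℤ) :
    ∃ a' b' c' d', s i * TT s a b c d = TT s a' b' c' d' * s i := by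
  simp only [Finset.mem_insert, Finset.mem_singleton] at hi
  rcases hi with rfl | rfl | rfl | rfl
  · exact ⟨_, _, _, _, (T1 h a b c d).eq⟩
  · exact ⟨_, _, _, _, (T2 h a b c d).eq⟩
  · exact ⟨_, _, _, _, (T3 h a b c d).eq⟩
  · exact ⟨_, _, _, _, (T4 h a b c d).eq⟩

lemma T_word (h : Cox s A5) {l : List ℕ} (hl : ∀ i ∈ l, i ∈ ({1, 2, 3, 4} : Finset ℕ))
    (a b c d : ℤ) : ∃ a' b' c' d', ev s l * TT s a b c d = TT s a' b' c' d' * ev s l := by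
  induction l with
  | nil => exact ⟨a, b, c, d, by simp⟩
  | cons i l ih =>
    obtain ⟨a1, b1, c1, d1, e⟩ := ih (fun j hj => hl j (by simp [hj]))
    obtain ⟨a2, b2, c2, d2, ee⟩ := T_letter h (hl i (by simp)) a1 b1 c1 d1
    exact ⟨a2, b2, c2, d2, by rw [ev_cons, mul_assoc, e, ← mul_assoc, ee, mul_assoc]⟩

/-- The finite part of the first translation. -/
def yw : List ℕ := [1, 2, 3, 2, 1, 4, 3, 2, 3, 4, 1, 2, 3, 2, 1]

/-- Normal form in the affine group. -/
lemma aff_nf (h : Cox s A5) {g : G}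
    (hg : g ∈ Subgroup.closure (s '' (({0, 1, 2, 3, 4} : Finset ℕ) : Set ℕ))) :
    ∃ a b c d, ∃ x ∈ Subgroup.closure (s '' (({1, 2, 3, 4} : Finset ℕ) : Set ℕ)),
      g = TT s a b c d * x := by
  have step : ∀ i ∈ ({0, 1, 2, 3, 4} : Finset ℕ), ∀ y : G,
      (∃ a b c d, ∃ x ∈ Subgroup.closure (s '' (({1, 2, 3, 4} : Finset ℕ) : Set ℕ)),
        y = TT s a b c d * x) →
      (∃ a b c d, ∃ x ∈ Subgroup.closure (s '' (({1, 2, 3, 4} : Finset ℕ) : Set ℕ)),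
        s i * y = TT s a b c d * x) := by
    rintro i hi y ⟨a, b, c, d, x, hx, rfl⟩
    rw [Finset.mem_insert] at hi
    rcases hi with rfl | hi
    · have hy : ∀ i ∈ yw.reverse, i ∈ ({1, 2, 3, 4} : Finset ℕ) := by decide
      have k := cmp_eq (l := [0]) (l' := w1 ++ yw.reverse) h (by decide +kernel)
      simp only [ev_cons, ev_nil, mul_one, ev_append] at k
      obtain ⟨a1, b1, c1, d1, e⟩ := T_word h hy a b c d
      refine ⟨1 + a1, 0 + b1, 0 + c1, 0 + d1, ev s yw.reverse * x,
        mul_mem (ev_mem s _ _ hy) hx, ?_⟩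
      rw [k, ← TT_mul h, ← e1, mul_assoc, ← mul_assoc _ _ x, e]
      simp only [mul_assoc]
    · obtain ⟨a1, b1, c1, d1, e⟩ := T_letter h hi a b c d
      exact ⟨a1, b1, c1, d1, s i * x, mul_mem (Subgroup.subset_closure ⟨i, hi, rfl⟩) hx,
        by rw [← mul_assoc, e, mul_assoc]⟩
  induction hg using Subgroup.closure_induction_left with
  | one => exact ⟨0, 0, 0, 0, 1, one_mem _, by simp⟩
  | mul_left x hx y hy ih =>
    obtain ⟨i, hi, rfl⟩ := hx
    exact step i hi y ih
  | inv_mul_cancel x hx y hy ih =>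
    obtain ⟨i, hi, rfl⟩ := hx
    rw [h.inv (show A5 i by
      simp only [Finset.coe_insert, Finset.coe_singleton, Set.mem_insert_iff,
        Set.mem_singleton_iff] at hi
      change i < 5
      omega)]
    exact step i hi y ih

lemma conj_mem_of_semi {N : Subgroup G} (hN : N.Normal) {x y z : G} (h : SemiconjBy x y z)
    (hy : y ∈ N) : z ∈ N := by
  have : z = x * y * x⁻¹ := by rw [h.eq]; group
  rw [this]
  exact hN.conj_mem y hy x

/-- Translations divisible by three are in `N`, when the first cube is. -/
lemma T3_mem (h : Cox s A5) {N : Subgroup G} (hN : N.Normal) (h1 : ev s w1 ^ 3 ∈ N)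
    {a b c d : ℤ} (ha : 3 ∣ a) (hb : 3 ∣ b) (hc : 3 ∣ c) (hd : 3 ∣ d) : TT s a b c d ∈ N := by
  have h2 : ev s w2 ^ 3 ∈ N := conj_mem_of_semi hN ((s11 h).pow_right 3) h1
  have h3 : ev s w3 ^ 3 ∈ N := conj_mem_of_semi hN ((s22 h).pow_right 3) h2
  have h4 : ev s w4 ^ 3 ∈ N := conj_mem_of_semi hN ((s33 h).pow_right 3) h3
  have key : ∀ (x : G) (n : ℤ), 3 ∣ n → x ^ 3 ∈ N → x ^ n ∈ N := by
    rintro x n ⟨k, rfl⟩ hx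
    rw [zpow_mul]
    exact zpow_mem (by exact_mod_cast hx) k
  exact mul_mem (mul_mem (mul_mem (key _ _ ha h1) (key _ _ hb h2)) (key _ _ hc h3))
    (key _ _ hd h4)

/-- The sublattice generated by the conjugates of the defining element. -/
lemma T6_mem (h : Cox s A5) {N : Subgroup G} (hN : N.Normal)
    (h1 : ev s [0, 1, 2, 3, 2, 1, 4, 3, 2, 3, 4] ^ 12 ∈ N)
    {a b c d : ℤ} (ha : 3 ∣ a) (hb : 3 ∣ b) (hc : 3 ∣ c) (hd : 3 ∣ d)
    (ha' : 2 ∣ a) (hb' : 2 ∣ b) (hc' : 2 ∣ c) (hd' : 2 ∣ d)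
    (k1 : 4 ∣ a + b) (k2 : 4 ∣ a + c + d) : TT s a b c d ∈ N := by
  have k := cmp_eq (l := pw [0, 1, 2, 3, 2, 1, 4, 3, 2, 3, 4] 2) (l' := w3 ++ w4) h
    (by decide +kernel)
  rw [ev_pw, ev_append, e3, e4, TT_mul h] at k
  have q1 : TT s 0 0 6 6 ∈ N := by
    have : TT s 0 0 6 6 = ev s [0, 1, 2, 3, 2, 1, 4, 3, 2, 3, 4] ^ 12 := by
      rw [show (12 : ℕ) = 2 * 6 from rfl, pow_mul, k, ← zpow_natCast, TT_zpow h]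
      norm_num
    rw [this]; exact h1
  have q2 := conj_mem_of_semi hN (T4 h _ _ _ _) q1
  have q3 := conj_mem_of_semi hN (T3 h _ _ _ _) q2
  have q4 := conj_mem_of_semi hN (T2 h _ _ _ _) q3
  norm_num at q2 q3 q4
  obtain ⟨m1, rfl⟩ : (6 : ℤ) ∣ a := by omega
  obtain ⟨m2, rfl⟩ : (6 : ℤ) ∣ b := by omega
  obtain ⟨m3, rfl⟩ : (6 : ℤ) ∣ c := by omega
  obtain ⟨m4, rfl⟩ : (6 : ℤ) ∣ d := by omega
  obtain ⟨z4, hz4⟩ : (2 : ℤ) ∣ m1 - m2 := by omega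
  obtain ⟨z1, hz1⟩ : (2 : ℤ) ∣ m2 + m3 + m4 := by omega
  obtain ⟨z, hz⟩ : (2 : ℤ) ∣ m1 + m2 := by omega
  have := mul_mem (mul_mem (zpow_mem q1 z1) (zpow_mem q2 (z1 - m4)))
    (mul_mem (zpow_mem q3 (z - (z1 - m4))) (zpow_mem q4 z4))
  simp only [TT_zpow h, TT_mul h] at this
  convert this using 1
  congr 1 <;> omega

/-! ## Action of translations on points -/

/-- The word of a translation with natural number exponents. -/
def tw (a b c d : ℕ) : List ℕ := pw w1 a ++ pw w2 b ++ pw w3 c ++ pw w4 d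

lemma ev_tw (a b c d : ℕ) : ev s (tw a b c d) = TT s a b c d := by
  simp [tw, TT, ev_pw, mul_assoc]

lemma tw_lt {a b c d : ℕ} : ∀ i ∈ tw a b c d, i < 5 := by
  intro i hi
  simp only [tw, List.mem_append] at hi
  have k1 : ∀ i ∈ w1, i < 5 := by decide
  have k2 : ∀ i ∈ w2, i < 5 := by decide
  have k3 : ∀ i ∈ w3, i < 5 := by decide
  have k4 : ∀ i ∈ w4, i < 5 := by decide
  rcases hi with ((hi | hi) | hi) | hi
  · exact k1 i (mem_pw hi)
  · exact k2 i (mem_pw hi)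
  · exact k3 i (mem_pw hi)
  · exact k4 i (mem_pw hi)

/-- The `m`-th powers of the translations fix a point. -/
def fixm (ρ : ℕ → ℕ) (m p : ℕ) : Bool :=
  (Nat.beq (evp ((tw m 0 0 0).map ρ) p) p && Nat.beq (evp ((tw 0 m 0 0).map ρ) p) p) &&
  (Nat.beq (evp ((tw 0 0 m 0).map ρ) p) p && Nat.beq (evp ((tw 0 0 0 m).map ρ) p) p)

variable {φ : G →* Equiv.Perm (Fin NN)} {ρ : ℕ → ℕ}

lemma T_act (hρ : ∀ i < 5, ρ i < 6) (hm : ∀ i < 5, φ (s i) = P (ρ i)) {a b c d p : ℕ}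
    (hp : p < NN) : φ (TT s a b c d) (pt p) = pt p ↔ evp ((tw a b c d).map ρ) p = p := by
  rw [← ev_tw]
  have e : φ (ev s (tw a b c d)) = ev P ((tw a b c d).map ρ) := by
    rw [Loc.ev_map s φ (fun i => P (ρ i)) _ (fun i hi => hm i (tw_lt i hi))]
    simp [ev, Function.comp_def]
  rw [e, evP_pt _ hp]
  intro i hi
  obtain ⟨j, hj, rfl⟩ := List.mem_map.1 hi
  exact hρ j (tw_lt j hj)

lemma T_fix (h : Cox s A5) (hρ : ∀ i < 5, ρ i < 6) (hm : ∀ i < 5, φ (s i) = P (ρ i)) {m p : ℕ}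
    (hp : p < NN) (hf : fixm ρ m p = true) (a b c d : ℤ) :
    φ (TT s (m * a) (m * b) (m * c) (m * d)) (pt p) = pt p := by
  simp only [fixm, Bool.and_eq_true] at hf
  obtain ⟨⟨f1, f2⟩, f3, f4⟩ := hf
  have f1 := (T_act hρ hm hp).2 (Nat.eq_of_beq_eq_true f1)
  have f2 := (T_act hρ hm hp).2 (Nat.eq_of_beq_eq_true f2)
  have f3 := (T_act hρ hm hp).2 (Nat.eq_of_beq_eq_true f3)
  have f4 := (T_act hρ hm hp).2 (Nat.eq_of_beq_eq_true f4)
  let S : Subgroup G := (MulAction.stabilizer (Equiv.Perm (Fin NN)) (pt p)).comap φ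
  have hS : ∀ g, φ g (pt p) = pt p ↔ g ∈ S := fun g => Iff.rfl
  rw [hS] at f1 f2 f3 f4 ⊢
  have := mul_mem (mul_mem (zpow_mem f1 a) (zpow_mem f2 b))
    (mul_mem (zpow_mem f3 c) (zpow_mem f4 d))
  simp only [TT_zpow h, TT_mul h] at this
  convert this using 1
  congr 1 <;> push_cast <;> ring

lemma T_mod (h : Cox s A5) (hρ : ∀ i < 5, ρ i < 6) (hm : ∀ i < 5, φ (s i) = P (ρ i)) {m p : ℕ}
    (hm0 : m ≠ 0) (hp : p < NN) (hf : fixm ρ m p = true) {a b c d : ℤ}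
    (ht : φ (TT s a b c d) (pt p) = pt p) :
    evp ((tw (a % m).toNat (b % m).toNat (c % m).toNat (d % m).toNat).map ρ) p = p := by
  rw [← T_act hρ hm hp]
  have hm0' : (m : ℤ) ≠ 0 := by exact_mod_cast hm0
  rw [Int.toNat_of_nonneg (Int.emod_nonneg _ hm0'), Int.toNat_of_nonneg (Int.emod_nonneg _ hm0'),
    Int.toNat_of_nonneg (Int.emod_nonneg _ hm0'), Int.toNat_of_nonneg (Int.emod_nonneg _ hm0')]
  have k : TT s a b c d = TT s (a % m) (b % m) (c % m) (d % m) *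
      TT s (m * (a / m)) (m * (b / m)) (m * (c / m)) (m * (d / m)) := by
    rw [TT_mul h, Int.emod_add_mul_ediv, Int.emod_add_mul_ediv, Int.emod_add_mul_ediv,
      Int.emod_add_mul_ediv]
  rw [k, map_mul, Equiv.Perm.mul_apply, T_fix h hρ hm hp hf] at ht
  exact ht

/-- The mirror. -/
def mi (i : ℕ) : ℕ := 5 - i

/-- Only the trivial translation modulo three fixes the point. -/
def chk3 (ρ : ℕ → ℕ) (p : ℕ) : Bool :=
  allB (fun a => allB (fun b => allB (fun c => allB (fun d =>
    !Nat.beq (evp ((tw a b c d).map ρ) p) p || Nat.beq (a + b + c + d) 0) 3) 3) 3) 3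

/-- Translations modulo four fixing the point. -/
def chk4 (p : ℕ) : Bool :=
  allB (fun a => allB (fun b => allB (fun c => allB (fun d =>
    !Nat.beq (evp ((tw a b c d).map id) p) p ||
      ((Nat.beq (a % 2 + b % 2 + c % 2 + d % 2) 0 && Nat.beq ((a + b) % 4) 0) &&
        Nat.beq ((a + c + d) % 4) 0)) 4) 4) 4) 4

theorem fix3_ok : allB (fixm id 3) 494 = true := by decide +kernel
theorem fix3m_ok : fixm mi 3 (om 5) = true := by decide +kernel
theorem fix4_ok : fixm id 4 494 = true := by decide +kernel
theorem chk3_ok : chk3 id (om 0) = true := by decide +kernel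
theorem chk3m_ok : chk3 mi (om 5) = true := by decide +kernel
theorem chk4_ok : chk4 494 = true := by decide +kernel

lemma div3 (h : Cox s A5) (hρ : ∀ i < 5, ρ i < 6) (hm : ∀ i < 5, φ (s i) = P (ρ i)) {p : ℕ}
    (hp : p < NN) (hf : fixm ρ 3 p = true) (hc : chk3 ρ p = true) {a b c d : ℤ}
    (ht : φ (TT s a b c d) (pt p) = pt p) : 3 ∣ a ∧ 3 ∣ b ∧ 3 ∣ c ∧ 3 ∣ d := by
  have k := T_mod h hρ hm (by norm_num) hp hf ht
  have e := allB_spec (allB_spec (allB_spec (allB_spec hc (a % 3).toNat (by omega))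
    (b % 3).toNat (by omega)) (c % 3).toNat (by omega)) (d % 3).toNat (by omega)
  rw [Bool.or_eq_true] at e
  rcases e with e | e
  · push_cast at k
    rw [k] at e
    simp at e
  · have := Nat.eq_of_beq_eq_true e
    omega

lemma div4 (h : Cox s A5) (hm : ∀ i < 5, φ (s i) = P i) {a b c d : ℤ}
    (ht : φ (TT s a b c d) (pt 494) = pt 494) :
    2 ∣ a ∧ 2 ∣ b ∧ 2 ∣ c ∧ 2 ∣ d ∧ 4 ∣ a + b ∧ 4 ∣ a + c + d := by
  have k := T_mod (ρ := id) h (fun i hi => by simp; omega) hm (m := 4) (by norm_num)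
    (by norm_num) fix4_ok ht
  have e := allB_spec (allB_spec (allB_spec (allB_spec chk4_ok (a % 4).toNat (by omega))
    (b % 4).toNat (by omega)) (c % 4).toNat (by omega)) (d % 4).toNat (by omega)
  rw [Bool.or_eq_true] at e
  rcases e with e | e
  · push_cast at k
    rw [k] at e
    simp at e
  · rw [Bool.and_eq_true, Bool.and_eq_true] at e
    have j1 := Nat.eq_of_beq_eq_true e.1.1
    have j2 := Nat.eq_of_beq_eq_true e.1.2
    have j3 := Nat.eq_of_beq_eq_true e.2
    omega

end affine
/-! ## Kernels -/

section kernels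
variable {G : Type*} [Group G] {s : ℕ → G} {φ : G →* Equiv.Perm (Fin NN)}

lemma kerW (h : Rep s A5 φ) {N : Subgroup G} (hN : N.Normal)
    (h1 : ev s [0, 1, 2, 3, 2, 1, 4, 3, 2, 3, 4] ^ 12 ∈ N) {g : G}
    (hg : g ∈ Subgroup.closure (s '' (({0, 1, 2, 3, 4} : Finset ℕ) : Set ℕ)))
    (hφ : φ g = 1) : g ∈ N := by
  obtain ⟨a, b, c, d, x, hx, rfl⟩ := aff_nf h.cox hg
  have hA : ∀ i ∈ ({1, 2, 3, 4} : Finset ℕ), A5 i := by decide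
  have hρ : ∀ i < 5, id i < 6 := fun i hi => by simp; omega
  have h0 : φ (TT s a b c d) (pt (om 0)) = pt (om 0) := by
    have k := congrArg (fun f : Equiv.Perm (Fin NN) => f (pt (om 0))) hφ
    simp only [map_mul, Equiv.Perm.mul_apply, Equiv.Perm.one_apply] at k
    rwa [fix_closure h hA (by decide) (by decide) hx] at k
  have d3 := div3 (ρ := id) h.cox hρ h.map ((om_lt (by decide)).trans (by decide))
    (allB_spec fix3_ok _ (om_lt (by decide))) chk3_ok h0
  obtain ⟨⟨a, rfl⟩, ⟨b, rfl⟩, ⟨c, rfl⟩, d, rfl⟩ := d3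
  have hx1 : x = 1 := by
    refine f4_trivial h hA hx (fun k hk => ?_)
    have hk6 : k < 6 := h.lt k (hA k hk)
    have k1 := congrArg (fun f : Equiv.Perm (Fin NN) => f (pt (om k))) hφ
    have k2 : φ (TT s (3 * a) (3 * b) (3 * c) (3 * d)) (pt (om k)) = pt (om k) :=
      T_fix (ρ := id) (m := 3) h.cox hρ h.map ((om_lt hk6).trans (by decide))
        (allB_spec fix3_ok _ (om_lt hk6)) a b c d
    simp only [map_mul, Equiv.Perm.mul_apply, Equiv.Perm.one_apply] at k1
    exact (φ (TT s (3 * a) (3 * b) (3 * c) (3 * d))).injective (k1.trans k2.symm)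
  subst hx1
  rw [mul_one] at hφ ⊢
  obtain ⟨q1, q2, q3, q4, q5, q6⟩ := div4 h.cox h.map (a := 3 * a) (b := 3 * b) (c := 3 * c)
    (d := 3 * d) (by rw [hφ]; rfl)
  exact T6_mem h.cox hN h1 ⟨a, rfl⟩ ⟨b, rfl⟩ ⟨c, rfl⟩ ⟨d, rfl⟩ q1 q2 q3 q4 q5 q6

/-- The letters of the dual affine group. -/
abbrev A5d : ℕ → Prop := fun i => 1 ≤ i ∧ i < 6

lemma mir_image (I J : Finset ℕ) (h1 : I.image mi = J) :
    (fun i => s (mi i)) '' (I : Set ℕ) = s '' (J : Set ℕ) := by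
  rw [← h1, Finset.coe_image, Set.image_image]

lemma mirV (h : Rep s A5d φ) {N : Subgroup G} (hN : N.Normal)
    (h1 : ev s [5, 4, 3, 2, 3, 4, 1, 2, 3, 2, 1, 4, 3, 2, 3, 4] ^ 3 ∈ N) {g : G}
    (hg : g ∈ Subgroup.closure (s '' (({1, 2, 3, 4, 5} : Finset ℕ) : Set ℕ)))
    (hφ : φ g (pt (om 5)) = pt (om 5)) :
    ∃ y ∈ N, ∃ x ∈ Subgroup.closure (s '' (({1, 2, 3, 4} : Finset ℕ) : Set ℕ)), g = y * x := by
  have hmA : ∀ i < 5, A5d (mi i) := by decide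
  have hc : Cox (fun i => s (mi i)) A5 := by
    intro i j hi hj
    have e : ∀ i < 5, ∀ j < 5, mm (mi i) (mi j) = mm i j := by decide
    rw [← e i hi j hj]
    exact h.cox _ _ (hmA i hi) (hmA j hj)
  rw [← mir_image {0, 1, 2, 3, 4} {1, 2, 3, 4, 5} (by decide)] at hg
  obtain ⟨a, b, c, d, x, hx, rfl⟩ := aff_nf hc hg
  rw [mir_image {1, 2, 3, 4} {1, 2, 3, 4} (by decide)] at hx
  rw [map_mul, Equiv.Perm.mul_apply, fix_closure h (by decide) (by decide) (by decide) hx] at hφ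
  obtain ⟨q1, q2, q3, q4⟩ := div3 (ρ := mi) hc (by decide) (fun i hi => h.map _ (hmA i hi))
    ((om_lt (by decide)).trans (by decide)) fix3m_ok chk3m_ok hφ
  exact ⟨_, T3_mem hc hN h1 q1 q2 q3 q4, x, hx, rfl⟩

lemma kerV (h : Rep s A5d φ) {N : Subgroup G} (hN : N.Normal) (hNk : N ≤ φ.ker)
    (h1 : ev s [5, 4, 3, 2, 3, 4, 1, 2, 3, 2, 1, 4, 3, 2, 3, 4] ^ 3 ∈ N) {g : G}
    (hg : g ∈ Subgroup.closure (s '' (({1, 2, 3, 4, 5} : Finset ℕ) : Set ℕ)))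
    (hφ : φ g = 1) : g ∈ N := by
  obtain ⟨y, hy, x, hx, rfl⟩ := mirV h hN h1 hg (by rw [hφ]; rfl)
  have e : φ y = 1 := hNk hy
  rw [map_mul, e, one_mul] at hφ
  rw [f4_trivial h (by decide) hx (fun k _ => by rw [hφ]; rfl), mul_one]
  exact hy

/-- The intersection property. -/
lemma inter (h : Rep s (fun i => i < 6) φ)
    (h1 : ev s [5, 4, 3, 2, 3, 4, 1, 2, 3, 2, 1, 4, 3, 2, 3, 4] ^ 3 = 1)
    {I J : Finset ℕ} (hI : ∀ i ∈ I, i < 6) (hJ : ∀ i ∈ J, i < 6) {g : G}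
    (gI : g ∈ Subgroup.closure (s '' (I : Set ℕ))) (gJ : g ∈ Subgroup.closure (s '' (J : Set ℕ))) :
    g ∈ Subgroup.closure (s '' ((I ∩ J : Finset ℕ) : Set ℕ)) := by
  have key : ∀ I ∈ (Finset.range 6).powerset, ∀ J ∈ (Finset.range 6).powerset,
      (∃ j ∈ [1, 2, 3, 4], j ∉ I) ∨ (∃ j ∈ [1, 2, 3, 4], j ∉ J) ∨ I ∩ J = I ∨ I ∩ J = J ∨
      (J = {0, 1, 2, 3, 4} ∧ I = {1, 2, 3, 4, 5}) ∨
      (I = {0, 1, 2, 3, 4} ∧ J = {1, 2, 3, 4, 5}) := by decide +kernel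
  have small : ∀ I J : Finset ℕ, (∀ i ∈ I, i < 6) → (∀ i ∈ J, i < 6) →
      g ∈ Subgroup.closure (s '' (I : Set ℕ)) → g ∈ Subgroup.closure (s '' (J : Set ℕ)) →
      (∃ j ∈ [1, 2, 3, 4], j ∉ I) → g ∈ Subgroup.closure (s '' ((I ∩ J : Finset ℕ) : Set ℕ)) := by
    intro I J hI hJ gI gJ hj
    have := descend h hI hj gI (I \ J) (fun k hk hkI =>
      fix_closure h hJ (hI k hkI) (Finset.mem_sdiff.1 hk).2 gJ)
    rwa [sdiff_sdiff_right_self] at this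
  have big : ∀ I J : Finset ℕ, J = {0, 1, 2, 3, 4} → I = {1, 2, 3, 4, 5} →
      g ∈ Subgroup.closure (s '' (I : Set ℕ)) → g ∈ Subgroup.closure (s '' (J : Set ℕ)) →
      g ∈ Subgroup.closure (s '' ((I ∩ J : Finset ℕ) : Set ℕ)) := by
    rintro I J rfl rfl gI gJ
    have h' : Rep s A5d φ :=
      ⟨fun i j hi hj => h.cox i j hi.2 hj.2, fun i hi => hi.2, fun i hi => h.map i hi.2⟩
    obtain ⟨y, hy, x, hx, rfl⟩ := mirV h' (N := ⊥) inferInstance (by rw [h1]; exact one_mem _) gI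
      (fix_closure h (by decide) (by decide) (by decide) gJ)
    rw [Subgroup.mem_bot] at hy
    rw [hy, one_mul]
    exact hx
  rcases key I (by rw [Finset.mem_powerset]; exact fun i hi => Finset.mem_range.2 (hI i hi)) J
    (by rw [Finset.mem_powerset]; exact fun i hi => Finset.mem_range.2 (hJ i hi)) with
    k | k | k | k | ⟨k1, k2⟩ | ⟨k1, k2⟩
  · exact small I J hI hJ gI gJ k
  · rw [Finset.inter_comm]; exact small J I hJ hI gJ gI k
  · rw [k]; exact gI
  · rw [k]; exact gJ
  · exact big I J k1 k2 gI gJ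
  · rw [Finset.inter_comm]; exact big J I k1 k2 gJ gI

end kernels

/-! ## The quotient -/

lemma cox6_eq (i j : Fin 6) : cox6 i j = mm i.1 j.1 := by revert i j; decide
lemma cox5_eq (i j : Fin 5) : cox5 i j = mm i.1 j.1 := by revert i j; decide
lemma cox5d_eq (i j : Fin 5) : cox5d i j = mm (i.1 + 1) (j.1 + 1) := by revert i j; decide

/-- The permutation representation of `W`. -/
def p0 : W →* Equiv.Perm (Fin NN) :=
  PresentedGroup.toGroup (rels := rels6) (f := fun i : Fin 6 => P i.1) (by
    rintro r ⟨⟨i, j⟩, rfl⟩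
    simp only [map_pow, map_mul, FreeGroup.lift_apply_of, cox6_eq]
    exact coxP _ _ i.2 j.2)

lemma p0_w (i : Fin 6) : p0 (w i) = P i.1 := PresentedGroup.toGroup.of _

/-- The quotient group. -/
abbrev QQ : Type := p0.range

/-- The projection. -/
def pq : W →* QQ := p0.rangeRestrict

/-- Generators of the quotient. -/
def sQ (i : ℕ) : QQ := if h : i < 6 then pq (w ⟨i, h⟩) else 1

lemma sQ_fin (i : Fin 6) : sQ i.1 = pq (w i) := by simp [sQ]

lemma val_sQ {i : ℕ} (h : i < 6) : p0.range.subtype (sQ i) = P i := by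
  have : sQ i = pq (w ⟨i, h⟩) := by simp [sQ, h]
  rw [this]
  exact p0_w ⟨i, h⟩

lemma repQ : Rep sQ (fun i => i < 6) p0.range.subtype where
  cox := by
    intro i j hi hj
    apply p0.range.subtype_injective
    rw [map_pow, map_mul, val_sQ hi, val_sQ hj, map_one]
    exact coxP i j hi hj
  lt := fun i hi => hi
  map := fun i hi => val_sQ hi

lemma evQ {l : List ℕ} (hl : ∀ i ∈ l, i < 6) {n : ℕ} (hc : checkW (pw l n) = true) :
    ev sQ l ^ n = 1 := by
  rw [← ev_pw]
  have hl' : ∀ i ∈ pw l n, i < 6 := fun i hi => hl i (mem_pw hi)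
  apply p0.range.subtype_injective
  rw [repQ.ev_map hl', evP_one hl' hc, map_one]

lemma relGQ : ev sQ [0, 1, 2, 3, 2, 1, 4, 3, 2, 3, 4] ^ 12 = 1 := evQ (by decide) relG_ok

lemma relVQ : ev sQ [5, 4, 3, 2, 3, 4, 1, 2, 3, 2, 1, 4, 3, 2, 3, 4] ^ 3 = 1 :=
  evQ (by decide) relV_ok

/-- The map from the first affine group. -/
def th : W5 →* QQ :=
  PresentedGroup.toGroup (rels := rels5) (f := fun i : Fin 5 => sQ i.1) (by
    rintro r ⟨⟨i, j⟩, rfl⟩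
    simp only [map_pow, map_mul, FreeGroup.lift_apply_of, cox5_eq]
    exact repQ.cox _ _ (i.2.trans (by decide)) (j.2.trans (by decide)))

lemma th_v (i : Fin 5) : th (v i) = sQ i.1 := PresentedGroup.toGroup.of _

/-- The map from the second affine group. -/
def thd : V5 →* QQ :=
  PresentedGroup.toGroup (rels := rels5d) (f := fun i : Fin 5 => sQ (i.1 + 1)) (by
    rintro r ⟨⟨i, j⟩, rfl⟩
    simp only [map_pow, map_mul, FreeGroup.lift_apply_of, cox5d_eq]
    exact repQ.cox _ _ (Nat.succ_lt_succ i.2) (Nat.succ_lt_succ j.2))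

lemma th_u (i : Fin 5) : thd (u i) = sQ (i.1 + 1) := PresentedGroup.toGroup.of _

/-- Generators of the first affine group. -/
def sv (i : ℕ) : W5 := if h : i < 5 then v ⟨i, h⟩ else 1

/-- Generators of the second affine group. -/
def su (i : ℕ) : V5 := if h : 1 ≤ i ∧ i < 6 then u ⟨i - 1, by omega⟩ else 1

lemma repW : Rep sv A5 (p0.range.subtype.comp th) where
  cox := by
    intro i j hi hj
    have e : ((FreeGroup.of (⟨i, hi⟩ : Fin 5) * FreeGroup.of ⟨j, hj⟩) ^ mm i j) ∈ rels5 :=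
      ⟨(⟨i, hi⟩, ⟨j, hj⟩), by simp only [cox5_eq]⟩
    have := PresentedGroup.one_of_mem e
    rw [map_pow, map_mul] at this
    have hi' : i < 5 := hi
    have hj' : j < 5 := hj
    simp only [sv, hi', hj', dif_pos]
    exact this
  lt := fun i hi => lt_trans hi (by decide)
  map := fun i hi => by
    have hi' : i < 5 := hi
    simp only [sv, hi', dif_pos, MonoidHom.comp_apply, th_v]
    exact val_sQ (by omega)

lemma repV : Rep su A5d (p0.range.subtype.comp thd) where
  cox := by
    intro i j hi hj
    have e : ((FreeGroup.of (⟨i - 1, by have := hi.1; have := hi.2; omega⟩ : Fin 5) *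
        FreeGroup.of ⟨j - 1, by have := hj.1; have := hj.2; omega⟩) ^ mm i j) ∈ rels5d :=
      ⟨(⟨i - 1, by have := hi.1; have := hi.2; omega⟩,
        ⟨j - 1, by have := hj.1; have := hj.2; omega⟩), by
        simp only [cox5d_eq]
        rw [Nat.sub_add_cancel hi.1, Nat.sub_add_cancel hj.1]⟩
    have := PresentedGroup.one_of_mem e
    rw [map_pow, map_mul] at this
    have hi' : 1 ≤ i ∧ i < 6 := hi
    have hj' : 1 ≤ j ∧ j < 6 := hj
    rw [su, su, dif_pos hi', dif_pos hj']
    exact this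
  lt := fun i hi => hi.2
  map := fun i hi => by
    have hi' : 1 ≤ i ∧ i < 6 := hi
    rw [su, dif_pos hi', MonoidHom.comp_apply, th_u]
    simp only [Nat.sub_add_cancel hi.1]
    exact val_sQ hi.2

lemma topW (g : W5) : g ∈ Subgroup.closure (sv '' (({0, 1, 2, 3, 4} : Finset ℕ) : Set ℕ)) := by
  have h : g ∈ Subgroup.closure (Set.range (PresentedGroup.of : Fin 5 → W5)) := by
    rw [PresentedGroup.closure_range_of]; trivial
  refine Subgroup.closure_mono ?_ h
  rintro _ ⟨i, rfl⟩
  refine ⟨i.1, ?_, by simp [sv, v]⟩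
  fin_cases i <;> simp

lemma topV (g : V5) : g ∈ Subgroup.closure (su '' (({1, 2, 3, 4, 5} : Finset ℕ) : Set ℕ)) := by
  have h : g ∈ Subgroup.closure (Set.range (PresentedGroup.of : Fin 5 → V5)) := by
    rw [PresentedGroup.closure_range_of]; trivial
  refine Subgroup.closure_mono ?_ h
  rintro _ ⟨i, rfl⟩
  refine ⟨i.1 + 1, ?_, by simp [su, u]⟩
  fin_cases i <;> simp

lemma ker_th : Subgroup.normalClosure ({(v 0 * sg5 * tu5) ^ (2 * 6)} : Set W5) = th.ker := by
  have e : v 0 * sg5 * tu5 = ev sv [0, 1, 2, 3, 2, 1, 4, 3, 2, 3, 4] := by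
    simp [sv, sg5, tu5, mul_assoc]
  apply le_antisymm
  · apply Subgroup.normalClosure_le_normal
    rw [Set.singleton_subset_iff, e]
    change th _ = 1
    rw [map_pow, Loc.ev_map sv th sQ _ ?_]
    · exact relGQ
    · intro x hx
      have : x < 5 := by revert x; decide
      simp only [sv, this, dif_pos, th_v]
  · intro g hg
    refine kerW repW inferInstance ?_ (topW g) ?_
    · rw [← e]
      exact Subgroup.subset_normalClosure rfl
    · rw [MonoidHom.comp_apply, MonoidHom.mem_ker.1 hg, map_one]

lemma ker_thd :
    Subgroup.normalClosure ({(u 4 * tud * sgd * tud) ^ 3} : Set V5) = thd.ker := by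
  have e : u 4 * tud * sgd * tud =
      ev su [5, 4, 3, 2, 3, 4, 1, 2, 3, 2, 1, 4, 3, 2, 3, 4] := by
    simp [su, sgd, tud, mul_assoc]
  have hle : Subgroup.normalClosure ({(u 4 * tud * sgd * tud) ^ 3} : Set V5) ≤ thd.ker := by
    apply Subgroup.normalClosure_le_normal
    rw [Set.singleton_subset_iff, e]
    change thd _ = 1
    rw [map_pow, Loc.ev_map su thd sQ _ ?_]
    · exact relVQ
    · intro x hx
      have hx : 1 ≤ x ∧ x < 6 := by revert x; decide
      rw [su, dif_pos hx, th_u]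
      simp only [Nat.sub_add_cancel hx.1]
  refine le_antisymm hle ?_
  intro g hg
  refine kerV repV inferInstance ?_ ?_ (topV g) ?_
  · intro x hx
    rw [MonoidHom.mem_ker, MonoidHom.comp_apply, MonoidHom.mem_ker.1 (hle hx), map_one]
  · rw [← e]
    exact Subgroup.subset_normalClosure rfl
  · rw [MonoidHom.comp_apply, MonoidHom.mem_ker.1 hg, map_one]

lemma range_th : th.range =
    Subgroup.closure ({pq (w 0), pq (w 1), pq (w 2), pq (w 3), pq (w 4)} : Set QQ) := by
  rw [MonoidHom.range_eq_map th, ← PresentedGroup.closure_range_of, MonoidHom.map_closure]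
  congr 1
  ext x
  simp only [← sQ_fin]
  constructor
  · rintro ⟨_, ⟨i, rfl⟩, rfl⟩
    change th (v i) ∈ _
    rw [th_v]
    fin_cases i <;> simp
  · have k : ∀ i : Fin 5, sQ i.1 ∈ th '' Set.range PresentedGroup.of :=
      fun i => ⟨v i, ⟨i, rfl⟩, th_v i⟩
    rintro (rfl | rfl | rfl | rfl | rfl)
    exacts [k 0, k 1, k 2, k 3, k 4]

lemma range_thd : thd.range =
    Subgroup.closure ({pq (w 1), pq (w 2), pq (w 3), pq (w 4), pq (w 5)} : Set QQ) := by
  rw [MonoidHom.range_eq_map thd, ← PresentedGroup.closure_range_of, MonoidHom.map_closure]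
  congr 1
  ext x
  simp only [← sQ_fin]
  constructor
  · rintro ⟨_, ⟨i, rfl⟩, rfl⟩
    change thd (u i) ∈ _
    rw [th_u]
    fin_cases i <;> simp
  · have k : ∀ i : Fin 5, sQ (i.1 + 1) ∈ thd '' Set.range PresentedGroup.of :=
      fun i => ⟨u i, ⟨i, rfl⟩, th_u i⟩
    rintro (rfl | rfl | rfl | rfl | rfl)
    exacts [k 0, k 1, k 2, k 3, k 4]

open Classical in
lemma image_fin (I : Set (Fin 6)) : (fun i => pq (w i)) '' I =
    sQ '' (((Finset.univ.filter (fun i => i ∈ I)).image Fin.val : Finset ℕ) : Set ℕ) := by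
  rw [Finset.coe_image, Set.image_image]
  simp only [sQ_fin]
  congr 1
  ext i
  simp

open Classical in
lemma ip (I J : Set (Fin 6)) :
    Subgroup.closure ((fun i => pq (w i)) '' I) ⊓ Subgroup.closure ((fun i => pq (w i)) '' J) =
      Subgroup.closure ((fun i => pq (w i)) '' (I ∩ J)) := by
  apply le_antisymm
  · rintro g ⟨gI, gJ⟩
    have hlt : ∀ I : Set (Fin 6), ∀ i ∈ (Finset.univ.filter (fun i => i ∈ I)).image Fin.val,
        i < 6 := by
      intro I i hi
      obtain ⟨j, -, rfl⟩ := Finset.mem_image.1 hi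
      exact j.2
    rw [SetLike.mem_coe, image_fin] at gI gJ
    have := inter repQ relVQ (hlt I) (hlt J) gI gJ
    rw [image_fin]
    convert this using 3
    rw [← Finset.image_inter _ _ Fin.val_injective]
    congr 2
    ext i
    simp
  · exact le_inf (Subgroup.closure_mono (Set.image_mono Set.inter_subset_left))
      (Subgroup.closure_mono (Set.image_mono Set.inter_subset_right))

end Loc

/-- There is a finite quotient Q of the Coxeter group W = [3,3,4,3,3] whose
a,...,e-parabolic is [3,3,4,3]_{(6,6,0,0)}, whose b,...,f-parabolic is
[3,4,3,3]_{(3,0,0,0)}, and which satisfies the intersection property; hence a finite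
locally toroidal polytope of type {{3,3,4,3}_{(6,6,0,0)}, {3,4,3,3}_{(3,0,0,0)}} exists. -/
theorem stmt_19 :
    ∃ (Q : Type) (_ : Group Q) (p : W →* Q),
      Finite Q ∧ Function.Surjective p ∧
      Nonempty
        ((Subgroup.closure ({p (w 0), p (w 1), p (w 2), p (w 3), p (w 4)} : Set Q)) ≃* Gq 6) ∧
      Nonempty
        ((Subgroup.closure ({p (w 1), p (w 2), p (w 3), p (w 4), p (w 5)} : Set Q)) ≃* Vq) ∧
      ∀ I J : Set (Fin 6),
        Subgroup.closure ((fun i => p (w i)) '' I) ⊓ Subgroup.closure ((fun i => p (w i)) '' J) =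
          Subgroup.closure ((fun i => p (w i)) '' (I ∩ J)) := by
  refine ⟨Loc.QQ, inferInstance, Loc.pq, inferInstance, Loc.p0.rangeRestrict_surjective, ?_, ?_, Loc.ip⟩
  · rw [← Loc.range_th]
    exact ⟨((QuotientGroup.quotientMulEquivOfEq Loc.ker_th).trans
      (QuotientGroup.quotientKerEquivRange Loc.th)).symm⟩
  · rw [← Loc.range_thd]
    exact ⟨((QuotientGroup.quotientMulEquivOfEq Loc.ker_thd).trans
      (QuotientGroup.quotientKerEquivRange Loc.thd)).symm⟩
end
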